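/- There exist a separable scattered compact Hausdorff space L and a closed linear subspace Y of C(L) which is isomorphic (as a Banach space) to c₀ such that the quotient Banach space C(L)/Y is not a C-space. -/

import Mathlib

open scoped ZeroAtInfty

/-- A Banach space is a *C-space* if it is isomorphic (via a continuous linear
equivalence) to `C(K, ℝ)` for some compact Hausdorff space `K`. -/
def IsCSpace (X : Type*) [NormedAddCommGroup X] [NormedSpace ℝ X] : Prop :=
  ∃ (K : Type) (_ : TopologicalSpace K) (_ : CompactSpace K) (_ : T2Space K),
    Nonempty (X ≃L[ℝ] C(K, ℝ))

/-- A topological space is scattered if every nonempty subset has a point isolated in it. -/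
def IsScatteredSpace (K : Type*) [TopologicalSpace K] : Prop :=
  ∀ S : Set K, S.Nonempty → ∃ x ∈ S, ∃ U : Set K, IsOpen U ∧ U ∩ S = {x}

section

open Filter Topology Set

/-- There is a family of size continuum of injective sequences of natural numbers with pairwise
almost disjoint ranges. -/
theorem exists_almostDisjoint_sequences :
    ∃ e : (ℕ → Bool) → ℕ → ℕ, (∀ θ, Function.Injective (e θ)) ∧
      ∀ θ θ', θ ≠ θ' → (range (e θ) ∩ range (e θ')).Finite := by
  refine ⟨fun θ k => Encodable.encode (List.ofFn fun i : Fin k => θ i), ?_, ?_⟩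
  · intro θ k l h
    have := congrArg List.length (Encodable.encode_injective h)
    simpa using this
  · intro θ θ' hne
    obtain ⟨m, hm⟩ := Function.ne_iff.mp hne
    refine ((finite_Iic m).image
      fun k => Encodable.encode (List.ofFn fun i : Fin k => θ i)).subset ?_
    rintro _ ⟨⟨k, rfl⟩, l, hl⟩
    refine ⟨k, ?_, rfl⟩
    have h := Encodable.encode_injective hl
    have hkl : l = k := by simpa using congrArg List.length h
    subst hkl
    by_contra hk
    have := congrFun (List.ofFn_injective h) ⟨m, by simpa using hk⟩
    exact hm this.symm

/-- A uniformly bounded sequence of real functions on a countable set has a pointwise convergent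
subsequence. -/
theorem exists_subseq_tendsto_of_countable {κ : Type*} [Countable κ] {z : ℕ → κ → ℝ} {C : ℝ}
    (hz : ∀ n y, |z n y| ≤ C) :
    ∃ s : ℕ → ℕ, StrictMono s ∧ ∃ l : κ → ℝ, ∀ y, Tendsto (fun i => z (s i) y) atTop (𝓝 (l y)) := by
  have hc : IsCompact (Set.pi univ fun _ : κ => Icc (-C) C) :=
    isCompact_univ_pi fun _ => isCompact_Icc
  obtain ⟨l, -, s, hs, hl⟩ := hc.tendsto_subseq (x := z) fun n y _ => abs_le.mp (hz n y)
  exact ⟨s, hs, l, fun y => (tendsto_pi_nhds.mp hl) y⟩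

theorem exists_infinite_subset_eventually_abs_le {J : Type*} {z : ℕ → J → ℝ} {M : ℝ}
    (hM : ∀ F : Finset J, ∀ᶠ n in atTop, ∑ y ∈ F, |z n y| ≤ M) {ε : ℝ} (hε : 0 < ε)
    {A : Set ℕ} (hA : A.Infinite) :
    ∃ A' ⊆ A, A'.Infinite ∧ ∃ F : Finset J, ∀ y ∉ F, ∀ᶠ n in atTop, n ∈ A' → |z n y| ≤ ε := by
  classical
  by_contra H
  push Not at H
  have key : ∀ k : ℕ, ∃ A' ⊆ A, A'.Infinite ∧
      ∃ F : Finset J, F.card = k ∧ ∀ y ∈ F, ∀ n ∈ A', ε < |z n y| := by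
    intro k
    induction k with
    | zero => exact ⟨A, Subset.rfl, hA, ∅, by simp⟩
    | succ k ih =>
      obtain ⟨A', hsub, hinf, F, hF, hz⟩ := ih
      obtain ⟨y, hy, hfr⟩ := H A' hsub hinf F
      refine ⟨{n | n ∈ A' ∧ ε < |z n y|}, fun n hn => hsub hn.1,
        Nat.frequently_atTop_iff_infinite.mp hfr, insert y F, by simp [hy, hF], ?_⟩
      intro y' hy' n hn
      rcases Finset.mem_insert.mp hy' with rfl | h
      · exact hn.2
      · exact hz y' h n hn.1
  obtain ⟨k, hk⟩ := exists_nat_gt (M / ε)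
  obtain ⟨A', -, hinf, F, hF, hz⟩ := key k
  obtain ⟨n, hn, hle⟩ := ((Nat.frequently_atTop_iff_infinite.mpr hinf).and_eventually (hM F)).exists
  have h1 : (F.card : ℝ) * ε ≤ ∑ y ∈ F, |z n y| := by
    rw [← nsmul_eq_mul]
    exact Finset.card_nsmul_le_sum _ _ _ fun y hy => (hz y hy n hn).le
  rw [hF] at h1
  rw [div_lt_iff₀ hε] at hk
  linarith

theorem exists_subseq_tendsto_zero_off_countable {J : Type*} {z : ℕ → J → ℝ} {M : ℝ}
    (hM : ∀ F : Finset J, ∀ᶠ n in atTop, ∑ y ∈ F, |z n y| ≤ M) :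
    ∃ s : ℕ → ℕ, StrictMono s ∧ ∃ Y : Set J, Y.Countable ∧
      ∀ y ∉ Y, Tendsto (fun i => z (s i) y) atTop (𝓝 0) := by
  have step : ∀ (k : ℕ) (A : {A : Set ℕ // A.Infinite}), ∃ A' : {A : Set ℕ // A.Infinite},
      A'.1 ⊆ A.1 ∧ ∃ F : Finset J, ∀ y ∉ F, ∀ᶠ n in atTop, n ∈ A'.1 →
        |z n y| ≤ 1 / ((k : ℝ) + 1) := by
    intro k A
    obtain ⟨A', h1, h2, h3⟩ :=
      exists_infinite_subset_eventually_abs_le hM (Nat.one_div_pos_of_nat (n := k)) A.2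
    exact ⟨⟨A', h2⟩, h1, h3⟩
  choose g hsub F hF using step
  let A : ℕ → {A : Set ℕ // A.Infinite} := fun n => Nat.rec ⟨univ, infinite_univ⟩ (fun k A => g k A) n
  have hA : ∀ k, A (k + 1) = g k (A k) := fun k => rfl
  have hanti : Antitone fun k => (A k).1 := antitone_nat_of_succ_le fun k => by
    rw [hA]; exact hsub k (A k)
  obtain ⟨s, hs, hsA⟩ := extraction_forall_of_frequently
    (P := fun k n => n ∈ (A k).1) fun k => Nat.frequently_atTop_iff_infinite.mpr (A k).2
  refine ⟨s, hs, ⋃ k, (F k (A k) : Set J), countable_iUnion fun k => Finset.countable_toSet _, ?_⟩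
  intro y hy
  simp only [mem_iUnion, Finset.mem_coe, not_exists] at hy
  rw [Metric.tendsto_atTop]
  intro ε hε
  obtain ⟨k, hk⟩ := exists_nat_one_div_lt hε
  have h := hs.tendsto_atTop.eventually (hF k (A k) y (hy k))
  obtain ⟨N, hN⟩ := eventually_atTop.mp (h.and (eventually_ge_atTop (k + 1)))
  refine ⟨N, fun n hn => ?_⟩
  rw [Real.dist_eq, sub_zero]
  refine ((hN n hn).1 ?_).trans_lt hk
  rw [← hA]
  exact hanti (hN n hn).2 (hsA n)

/-- Weak* sequential compactness: bounded sequences of functions which are eventually uniformly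
absolutely summable over finite sets have pointwise convergent subsequences. -/
theorem exists_subseq_tendsto {J : Type*} {z : ℕ → J → ℝ} {M C : ℝ}
    (hM : ∀ F : Finset J, ∀ᶠ n in atTop, ∑ y ∈ F, |z n y| ≤ M) (hz : ∀ n y, |z n y| ≤ C) :
    ∃ s : ℕ → ℕ, StrictMono s ∧ ∀ y, ∃ l, Tendsto (fun i => z (s i) y) atTop (𝓝 l) := by
  obtain ⟨s, hs, Y, hY, h0⟩ := exists_subseq_tendsto_zero_off_countable hM
  have := hY.to_subtype
  obtain ⟨t, ht, l, hl⟩ := exists_subseq_tendsto_of_countable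
    (z := fun n (y : Y) => z (s n) y) (fun n y => hz _ _)
  refine ⟨s ∘ t, hs.comp ht, fun y => ?_⟩
  by_cases hy : y ∈ Y
  · exact ⟨_, hl ⟨y, hy⟩⟩
  · exact ⟨0, (h0 y hy).comp ht.tendsto_atTop⟩

theorem countable_setOf_not_tendsto_zero {ι J : Type*} (U : Ultrafilter ι) {z : ι → J → ℝ} {M : ℝ}
    (hM : ∀ F : Finset J, ∀ᶠ n in (U : Filter ι), ∑ y ∈ F, |z n y| ≤ M) :
    {y | ¬ Tendsto (fun i => z i y) U (𝓝 0)}.Countable := by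
  have hfin : ∀ k : ℕ,
      {y | ¬ ∀ᶠ i in (U : Filter ι), |z i y| ≤ 1 / ((k : ℝ) + 1)}.Finite := by
    intro k
    by_contra hinf
    have hε : 0 < 1 / ((k : ℝ) + 1) := Nat.one_div_pos_of_nat
    obtain ⟨N, hN⟩ := exists_nat_gt (M / (1 / ((k : ℝ) + 1)))
    obtain ⟨F, hF, hcard⟩ := Set.Infinite.exists_subset_card_eq hinf N
    have hall : ∀ᶠ i in (U : Filter ι), ∀ y ∈ F, 1 / ((k : ℝ) + 1) < |z i y| := by
      rw [Filter.eventually_all_finset]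
      intro y hy
      have := Ultrafilter.eventually_not.mpr (hF hy)
      simpa using this
    obtain ⟨i, hi, hle⟩ := (hall.and (hM F)).exists
    have h1 : (F.card : ℝ) * (1 / ((k : ℝ) + 1)) ≤ ∑ y ∈ F, |z i y| := by
      rw [← nsmul_eq_mul]
      exact Finset.card_nsmul_le_sum _ _ _ fun y hy => (hi y hy).le
    rw [hcard] at h1
    rw [div_lt_iff₀ hε] at hN
    linarith
  refine (countable_iUnion fun k => (hfin k).countable).mono ?_
  intro y hy
  by_contra hcon
  simp only [mem_iUnion, mem_ofPred_eq, not_exists, not_not] at hcon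
  refine hy ?_
  rw [Metric.tendsto_nhds]
  intro ε hε
  obtain ⟨k, hk⟩ := exists_nat_one_div_lt hε
  filter_upwards [hcon k] with i hi
  rw [Real.dist_eq, sub_zero]
  exact hi.trans_lt hk

/-- The duality pairing of an absolutely summable sequence with a bounded sequence. -/
noncomputable def pairing (a f : ℕ → ℝ) : ℝ := ∑' m, a m * f m

theorem summable_mul_of_abs_le_one {a f : ℕ → ℝ} (ha : Summable fun m => |a m|)
    (hf : ∀ m, |f m| ≤ 1) : Summable fun m => a m * f m := by
  refine Summable.of_norm_bounded ha fun m => ?_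
  rw [Real.norm_eq_abs, abs_mul]
  exact mul_le_of_le_one_right (abs_nonneg _) (hf m)

theorem abs_pairing_le {a f : ℕ → ℝ} (ha : Summable fun m => |a m|) (hf : ∀ m, |f m| ≤ 1) :
    |pairing a f| ≤ ∑' m, |a m * f m| := by
  have := (summable_mul_of_abs_le_one ha hf).norm
  exact norm_tsum_le_tsum_norm this

theorem abs_pairing_le_of_tsum_le {a f : ℕ → ℝ} {M : ℝ} (ha : Summable fun m => |a m|)
    (hM : ∑' m, |a m| ≤ M) (hf : ∀ m, |f m| ≤ 1) : |pairing a f| ≤ M := by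
  refine (abs_pairing_le ha hf).trans (le_trans ?_ hM)
  refine Summable.tsum_le_tsum (fun m => ?_) (summable_mul_of_abs_le_one ha hf).abs ha
  rw [abs_mul]
  exact mul_le_of_le_one_right (abs_nonneg _) (hf m)

theorem pairing_sub_left {a b f : ℕ → ℝ} (ha : Summable fun m => |a m|)
    (hb : Summable fun m => |b m|) (hf : ∀ m, |f m| ≤ 1) :
    pairing (fun m => a m - b m) f = pairing a f - pairing b f := by
  unfold pairing
  rw [← (summable_mul_of_abs_le_one ha hf).tsum_sub (summable_mul_of_abs_le_one hb hf)]
  exact tsum_congr fun m => sub_mul _ _ _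

theorem eventually_sum_abs_pairing_le {ι J : Type*} {l : Filter ι} {w : ι → ℕ → ℝ} {M : ℝ}
    (hs : ∀ i, Summable fun m => |w i m|) (hM : ∀ i, ∑' m, |w i m| ≤ M)
    (h0 : ∀ m, Tendsto (fun i => w i m) l (𝓝 0)) {f : J → ℕ → ℝ} (hf : ∀ y m, |f y m| ≤ 1)
    (had : Pairwise fun y z => (Function.support (f y) ∩ Function.support (f z)).Finite)
    (F : Finset J) : ∀ᶠ i in l, ∑ y ∈ F, |pairing (w i) (f y)| ≤ M + 1 := by
  classical
  have hG : (⋃ y ∈ F, ⋃ z ∈ F, ⋃ _ : y ≠ z,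
      (Function.support (f y) ∩ Function.support (f z))).Finite := by
    refine F.finite_toSet.biUnion fun y _ => F.finite_toSet.biUnion fun z _ => ?_
    exact finite_iUnion fun h => had h
  set G := hG.toFinset with hGdef
  have hoff : ∀ m ∉ G, ∑ y ∈ F, |f y m| ≤ 1 := by
    intro m hm
    by_cases hex : ∃ y ∈ F, f y m ≠ 0
    · obtain ⟨y, hy, hne⟩ := hex
      rw [Finset.sum_eq_single_of_mem y hy]
      · exact hf y m
      · intro z hz hzy
        by_contra hzne
        refine hm ?_
        simp only [hGdef, Finite.mem_toFinset, mem_iUnion]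
        exact ⟨y, hy, z, hz, hzy.symm, hne, by simpa using hzne⟩
    · push Not at hex
      rw [Finset.sum_eq_zero fun y hy => by simp [hex y hy]]
      exact zero_le_one
  have hon : ∀ m, ∑ y ∈ F, |f y m| ≤ F.card := fun m => by
    simpa using Finset.sum_le_card_nsmul F (fun y => |f y m|) 1 fun y _ => hf y m
  have hsmall : Tendsto (fun i => (F.card : ℝ) * ∑ m ∈ G, |w i m|) l (𝓝 0) := by
    have : Tendsto (fun i => ∑ m ∈ G, |w i m|) l (𝓝 (∑ m ∈ G, |(0 : ℝ)|)) :=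
      tendsto_finsetSum _ fun m _ => (h0 m).abs
    simpa using this.const_mul (F.card : ℝ)
  filter_upwards [hsmall.eventually (gt_mem_nhds one_pos)] with i hi
  have hsum : ∀ y, Summable fun m => |w i m * f y m| := fun y =>
    (summable_mul_of_abs_le_one (hs i) (hf y)).abs
  have hGs : Summable fun m => if m ∈ G then (F.card : ℝ) * |w i m| else 0 :=
    summable_of_ne_finset_zero (s := G) fun m hm => by simp [hm]
  calc ∑ y ∈ F, |pairing (w i) (f y)| ≤ ∑ y ∈ F, ∑' m, |w i m * f y m| :=
        Finset.sum_le_sum fun y _ => abs_pairing_le (hs i) (hf y)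
    _ = ∑' m, ∑ y ∈ F, |w i m * f y m| := (Summable.tsum_finsetSum fun y _ => hsum y).symm
    _ ≤ ∑' m, (|w i m| + if m ∈ G then (F.card : ℝ) * |w i m| else 0) := by
        refine Summable.tsum_le_tsum (fun m => ?_) (summable_sum fun y _ => hsum y)
          ((hs i).add hGs)
        simp_rw [abs_mul]
        rw [← Finset.mul_sum]
        by_cases hm : m ∈ G
        · simp only [hm, if_true]
          nlinarith [abs_nonneg (w i m), hon m]
        · simp only [hm, if_false, add_zero]
          exact mul_le_of_le_one_right (abs_nonneg _) (hoff m hm)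
    _ = ∑' m, |w i m| + (F.card : ℝ) * ∑ m ∈ G, |w i m| := by
        have hG' : ∑' m, (if m ∈ G then (F.card : ℝ) * |w i m| else 0)
            = ∑ m ∈ G, (F.card : ℝ) * |w i m| :=
          (tsum_eq_sum (s := G) fun m hm => if_neg hm).trans
            (Finset.sum_congr rfl fun m hm => if_pos hm)
        rw [(hs i).tsum_add hGs, hG', Finset.mul_sum]
    _ ≤ M + 1 := add_le_add (hM i) hi.le

/-- Greedy extraction making the off-diagonal entries of a matrix small. -/
theorem exists_subseq_offDiagonal_le {r : ℕ → ℕ → ℝ} {ρ : ℕ → ℝ}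
    (hrow : ∀ i, Tendsto (fun j => r i j) atTop (𝓝 0))
    (hcol : ∀ j, Tendsto (fun i => r i j) atTop (𝓝 (ρ j))) (hρ : Tendsto ρ atTop (𝓝 0))
    {δ : ℝ} (hδ : 0 < δ) :
    ∃ t : ℕ → ℕ, StrictMono t ∧ ∀ i j, i ≠ j → r (t i) (t j) ≤ δ * (1 / 2) ^ j := by
  have hpos : ∀ k : ℕ, 0 < δ * (1 / 2) ^ k := fun k => by positivity
  obtain ⟨f, hfP, hfr⟩ := exists_seq_of_forall_finset_exists
    (fun p : ℕ × ℕ => ρ p.1 < δ * (1 / 2) ^ p.2)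
    (fun p q => p.1 < q.1 ∧ p.2 < q.2 ∧ r p.1 q.1 ≤ δ * (1 / 2) ^ q.2 ∧
      r q.1 p.1 ≤ δ * (1 / 2) ^ p.2) (by
    intro s hs
    obtain ⟨k, hk⟩ : ∃ k : ℕ, ∀ p ∈ s, p.2 < k := by
      obtain ⟨k, hk⟩ := (s.image Prod.snd).exists_nat_subset_range
      exact ⟨k, fun p hp => by simpa using hk (Finset.mem_image_of_mem _ hp)⟩
    have h1 : ∀ᶠ t in atTop, ∀ p ∈ s, p.1 < t ∧ r p.1 t ≤ δ * (1 / 2) ^ k ∧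
        r t p.1 ≤ δ * (1 / 2) ^ p.2 := by
      rw [Filter.eventually_all_finset]
      intro p hp
      filter_upwards [eventually_gt_atTop p.1, (hrow p.1).eventually (gt_mem_nhds (hpos k)),
        (hcol p.1).eventually (gt_mem_nhds (hs p hp))] with t h1 h2 h3
      exact ⟨h1, h2.le, h3.le⟩
    obtain ⟨t, ht, ht'⟩ := (h1.and (hρ.eventually (gt_mem_nhds (hpos k)))).exists
    exact ⟨(t, k), ht', fun p hp => ⟨(ht p hp).1, hk p hp, (ht p hp).2.1, (ht p hp).2.2⟩⟩)
  have hk : StrictMono fun n => (f n).2 := fun m n h => (hfr m n h).2.1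
  have hle : ∀ j, δ * (1 / 2 : ℝ) ^ (f j).2 ≤ δ * (1 / 2) ^ j := fun j =>
    mul_le_mul_of_nonneg_left
      (pow_le_pow_of_le_one (by norm_num) (by norm_num) (hk.id_le j)) hδ.le
  refine ⟨fun n => (f n).1, fun m n h => (hfr m n h).1, fun i j hij => ?_⟩
  rcases lt_or_gt_of_ne hij with h | h
  · exact (hfr i j h).2.2.1.trans (hle j)
  · exact (hfr j i h).2.2.2.trans (hle j)

/-- Well-founded recursion producing a family satisfying pairwise requirements. -/
theorem exists_family_of_step {I β : Type*} [LinearOrder I] [WellFoundedLT I] [Nonempty β]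
    (P : I → β → Prop) (R : I → I → β → β → Prop)
    (h : ∀ x (g : I → β), (∀ y < x, P y (g y)) →
      ∃ s, P x s ∧ ∀ y < x, R y x (g y) s) :
    ∃ g : I → β, (∀ x, P x (g x)) ∧ ∀ x, ∀ y < x, R y x (g y) (g x) := by
  classical
  let G : ∀ x : I, (∀ y, y < x → β) → β := fun x prev =>
    Classical.epsilon fun s => P x s ∧ ∀ y (hy : y < x), R y x (prev y hy) s
  let g : I → β := (wellFounded_lt (α := I)).fix G
  have hg : ∀ x, g x = Classical.epsilon fun s => P x s ∧ ∀ y < x, R y x (g y) s := fun x =>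
    (wellFounded_lt (α := I)).fix_eq G x
  have key : ∀ x, P x (g x) ∧ ∀ y < x, R y x (g y) (g x) := by
    intro x
    induction x using (wellFounded_lt (α := I)).induction with
    | _ x ih =>
      have := Classical.epsilon_spec (h x g fun y hy => (ih y hy).1)
      rwa [← hg] at this
  exact ⟨g, fun x => (key x).1, fun x => (key x).2⟩

theorem abs_pairing_sub_le {α f : ℕ → ℝ} (hα : Summable fun m => |α m|) (hf : ∀ m, |f m| ≤ 1)
    {A : ℕ → ℕ} (hA : Function.Injective A) (hsupp : Function.support f ⊆ range A) {δ : ℝ} {k : ℕ}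
    (h : ∀ i, i ≠ k → |α (A i)| ≤ δ * (1 / 2) ^ i) (hδ : 0 ≤ δ) :
    |pairing α f - α (A k) * f (A k)| ≤ δ * 2 := by
  have hsum := summable_mul_of_abs_le_one hα hf
  have h1 : pairing α f = ∑' i, α (A i) * f (A i) :=
    (hA.tsum_eq (f := fun m => α m * f m) fun m hm => hsupp (right_ne_zero_of_mul hm)).symm
  have h2 : Summable fun i => α (A i) * f (A i) := hsum.comp_injective hA
  rw [h1, h2.tsum_eq_add_tsum_ite k, add_sub_cancel_left, ← Real.norm_eq_abs]
  refine tsum_of_norm_bounded (hasSum_geometric_two.mul_left δ) fun i => ?_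
  split_ifs with hi
  · simp only [norm_zero]; positivity
  · rw [Real.norm_eq_abs, abs_mul]
    exact (mul_le_of_le_one_right (abs_nonneg _) (hf _)).trans (h i hi)

/-- A pair of matrices `a`, `b` is admissible if `a` has rows bounded in `ℓ₁` and diagonal bounded
away from zero, while the entries of `b` are bounded. -/
def IsAdmissible (a b : ℕ → ℕ → ℝ) : Prop :=
  ∃ M c : ℝ, 0 < c ∧ (∀ n, Summable fun m => |a n m|) ∧ (∀ n, ∑' m, |a n m| ≤ M) ∧
    (∀ n m, |b n m| ≤ M) ∧ ∀ n, c ≤ |a n n|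

/-- A function on `ℕ` together with three sequences of natural numbers. -/
structure Trisection where
  f : ℕ → ℝ
  p : ℕ → ℕ
  q : ℕ → ℕ
  r : ℕ → ℕ

/-- The sign function of the trisection separates the rows of `a` along its three sequences,
while these rows, as well as those of `b`, have the same pointwise behaviour. -/
structure Trisection.IsAdapted (s : Trisection) (A : ℕ → ℕ) (a b : ℕ → ℕ → ℝ) : Prop where
  sign : ∀ m, s.f m = 0 ∨ s.f m = 1 ∨ s.f m = -1
  support_subset : Function.support s.f ⊆ range A
  support_infinite : (Function.support s.f).Infinite
  separated : ∃ δ > 0, ∀ i, δ ≤ pairing (a (s.p i)) s.f - pairing (a (s.r i)) s.f ∧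
    δ ≤ pairing (a (s.r i)) s.f - pairing (a (s.q i)) s.f
  tendsto_left : ∀ m, Tendsto (fun i => a (s.p i) m - a (s.r i) m) atTop (𝓝 0) ∧
    Tendsto (fun i => a (s.q i) m - a (s.r i) m) atTop (𝓝 0)
  tendsto_right : ∀ m, Tendsto (fun i => b (s.p i) m - b (s.r i) m) atTop (𝓝 0) ∧
    Tendsto (fun i => b (s.q i) m - b (s.r i) m) atTop (𝓝 0)

theorem abs_le_one_of_sign {x : ℝ} (h : x = 0 ∨ x = 1 ∨ x = -1) : |x| ≤ 1 := by
  rcases h with rfl | rfl | rfl <;> simp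

/-- The differences of the rows of `a` along the sequences of the trisection tend to zero at `g`
along a fixed free ultrafilter. -/
def Trisection.IsNull (s : Trisection) (a : ℕ → ℕ → ℝ) (g : ℕ → ℝ) : Prop :=
  Tendsto (fun i => pairing (a (s.p i)) g - pairing (a (s.r i)) g) (hyperfilter ℕ) (𝓝 0) ∧
    Tendsto (fun i => pairing (a (s.q i)) g - pairing (a (s.r i)) g) (hyperfilter ℕ) (𝓝 0)

theorem Trisection.IsAdapted.countable_not_isNull {s : Trisection} {A : ℕ → ℕ} {a b : ℕ → ℕ → ℝ}
    (hab : IsAdmissible a b) (hs : s.IsAdapted A a b) {J : Type*} {g : J → ℕ → ℝ}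
    (hg : ∀ y m, |g y m| ≤ 1)
    (had : Pairwise fun y z => (Function.support (g y) ∩ Function.support (g z)).Finite) :
    {y | ¬ s.IsNull a (g y)}.Countable := by
  obtain ⟨M, c, -, hsum, hM, -, -⟩ := hab
  have key : ∀ u v : ℕ → ℕ, (∀ m, Tendsto (fun i => a (u i) m - a (v i) m) atTop (𝓝 0)) →
      {y | ¬ Tendsto (fun i => pairing (a (u i)) (g y) - pairing (a (v i)) (g y))
        (hyperfilter ℕ) (𝓝 0)}.Countable := by
    intro u v huv
    have hs' : ∀ i, Summable fun m => |a (u i) m - a (v i) m| := fun i =>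
      (hsum (u i)).of_abs.sub (hsum (v i)).of_abs |>.abs
    have h := eventually_sum_abs_pairing_le (l := (hyperfilter ℕ : Filter ℕ))
      (w := fun i m => a (u i) m - a (v i) m) (M := M + M) hs'
      (fun i => by
        refine (Summable.tsum_le_tsum (fun m => abs_sub _ _) (hs' i)
          ((hsum (u i)).add (hsum (v i)))).trans ?_
        rw [(hsum (u i)).tsum_add (hsum (v i))]
        exact add_le_add (hM _) (hM _))
      (fun m => (huv m).mono_left Nat.hyperfilter_le_atTop) hg had
    have h2 := countable_setOf_not_tendsto_zero (hyperfilter ℕ) h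
    simpa only [pairing_sub_left (hsum _) (hsum _) (hg _)] using h2
  refine ((key s.p s.r fun m => (hs.tendsto_left m).1).union
    (key s.q s.r fun m => (hs.tendsto_left m).2)).mono fun y hy => ?_
  simp only [Trisection.IsNull, mem_ofPred_eq, not_and_or] at hy
  exact hy

theorem exists_trisections {J : Type*} {a b : ℕ → ℕ → ℝ} (hab : IsAdmissible a b) {A : ℕ → ℕ}
    (hA : Function.Injective A) {f : J → ℕ → ℝ} (hf : ∀ y m, |f y m| ≤ 1)
    (had : Pairwise fun y z => (Function.support (f y) ∩ Function.support (f z)).Finite) :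
    ∃ σ : (ℕ → Bool) → Trisection, (∀ θ, (σ θ).IsAdapted A a b) ∧
      (Pairwise fun θ θ' =>
        (Function.support (σ θ).f ∩ Function.support (σ θ').f).Finite) ∧
      ∀ θ y, (σ θ).IsNull a (f y) := by
  classical
  obtain ⟨M, c, hc, hsum, hM, hb, hdiag⟩ := hab
  have hentry : ∀ n m, |a n m| ≤ M := fun n m =>
    ((hsum n).le_tsum m fun _ _ => abs_nonneg _).trans (hM n)
  obtain ⟨s, hs, l, hl⟩ := exists_subseq_tendsto_of_countable (κ := ℕ ⊕ ℕ) (C := M)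
    (z := fun n => Sum.elim (a (A n)) (b (A n))) (by
      rintro n (m | m)
      exacts [hentry _ _, hb _ _])
  have hla : ∀ m, Tendsto (fun i => a (A (s i)) m) atTop (𝓝 (l (Sum.inl m))) := fun m =>
    hl (Sum.inl m)
  have hlb : ∀ m, Tendsto (fun i => b (A (s i)) m) atTop (𝓝 (l (Sum.inr m))) := fun m =>
    hl (Sum.inr m)
  set α : ℕ → ℝ := fun m => l (Sum.inl m) with hα
  have hαle : ∀ F : Finset ℕ, ∑ m ∈ F, |α m| ≤ M := fun F =>
    le_of_tendsto (tendsto_finsetSum F fun m _ => (hla m).abs)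
      (Eventually.of_forall fun i =>
        ((hsum _).sum_le_tsum F fun _ _ => abs_nonneg _).trans (hM _))
  have hαs : Summable fun m => |α m| := summable_of_sum_le (fun m => abs_nonneg _) hαle
  have hαM : ∑' m, |α m| ≤ M := hαs.tsum_le_of_sum_le hαle
  have hws : ∀ i, Summable fun m => |a (A (s i)) m - α m| := fun i =>
    (hsum _).of_abs.sub hαs.of_abs |>.abs
  have hwM : ∀ i, ∑' m, |a (A (s i)) m - α m| ≤ M + M := fun i => by
    refine (Summable.tsum_le_tsum (fun m => abs_sub _ _) (hws i) ((hsum _).add hαs)).trans ?_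
    rw [(hsum _).tsum_add hαs]
    exact add_le_add (hM _) hαM
  obtain ⟨u, hu, hlu⟩ := exists_subseq_tendsto
    (z := fun i y => pairing (fun m => a (A (s i)) m - α m) (f y)) (C := M + M)
    (eventually_sum_abs_pairing_le hws hwM
      (fun m => by simpa [hα] using (hla m).sub_const (α m)) hf had)
    (fun i y => abs_pairing_le_of_tsum_le (hws i) (hwM i) (hf y))
  set B : ℕ → ℕ := fun i => A (s (u i)) with hB
  have hBinj : Function.Injective B := hA.comp (hs.injective.comp hu.injective)
  obtain ⟨t, ht, htd⟩ := exists_subseq_offDiagonal_le (r := fun i j => |a (B i) (B j)|)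
    (ρ := fun j => |α (B j)|) (δ := c / 16)
    (fun i => ((hsum (B i)).comp_injective hBinj).tendsto_atTop_zero)
    (fun j => ((hla (B j)).comp hu.tendsto_atTop).abs)
    (hαs.comp_injective hBinj).tendsto_atTop_zero (by positivity)
  obtain ⟨e, heinj, head⟩ := exists_almostDisjoint_sequences
  set D : ℕ → ℕ := fun i => B (t i) with hD
  have hDinj : Function.Injective D := hBinj.comp ht.injective
  have hDe : ∀ θ, Function.Injective (D ∘ e θ) := fun θ => hDinj.comp (heinj θ)
  let sg : ℕ → ℝ := fun m => if 0 ≤ a m m then 1 else -1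
  have hsg : ∀ m, a m m * sg m = |a m m| := fun m => by
    simp only [sg]
    split_ifs with h
    · rw [mul_one, abs_of_nonneg h]
    · rw [mul_neg_one, abs_of_neg (not_le.mp h)]
  have hsg' : ∀ m, sg m = 1 ∨ sg m = -1 := fun m => by
    simp only [sg]
    split_ifs <;> simp
  let ε : ℕ → ℝ := fun j => if j % 3 = 0 then 1 else if j % 3 = 1 then -1 else 0
  let F : (ℕ → Bool) → ℕ → ℝ := fun θ =>
    Function.extend (D ∘ e θ) (fun j => ε j * sg (D (e θ j))) 0
  have hFD : ∀ θ j, F θ (D (e θ j)) = ε j * sg (D (e θ j)) := fun θ j =>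
    (hDe θ).extend_apply _ _ j
  have hFsupp : ∀ θ, Function.support (F θ) ⊆ range (D ∘ e θ) := fun θ m hm => by
    by_contra hcon
    exact hm (Function.extend_apply' _ _ _ hcon)
  have hFsign : ∀ θ m, F θ m = 0 ∨ F θ m = 1 ∨ F θ m = -1 := fun θ m => by
    by_cases hm : m ∈ range (D ∘ e θ)
    · obtain ⟨j, rfl⟩ := hm
      rw [Function.comp_apply, hFD]
      simp only [ε]
      rcases hsg' (D (e θ j)) with h | h <;> rw [h] <;> split_ifs <;> simp
    · exact Or.inl (by by_contra h; exact hm (hFsupp θ h))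
  have hF1 : ∀ θ m, |F θ m| ≤ 1 := fun θ m => abs_le_one_of_sign (hFsign θ m)
  have hpair : ∀ θ j,
      |pairing (a (D (e θ j))) (F θ) - ε j * (|a (D (e θ j)) (D (e θ j))|)| ≤ c / 16 * 2 := by
    intro θ j
    have := abs_pairing_sub_le (hsum (D (e θ j))) (hF1 θ) hDinj
      ((hFsupp θ).trans (range_comp_subset_range _ _)) (k := e θ j) (δ := c / 16)
      (fun i hi => htd _ _ hi.symm) (by positivity)
    rw [hFD] at this
    convert this using 3
    rw [← hsg]; ring
  have hε0 : ∀ i, ε (3 * i) = 1 := fun i => by simp [ε]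
  have hε1 : ∀ i, ε (3 * i + 1) = -1 := fun i => by
    have : (3 * i + 1) % 3 = 1 := by omega
    simp [ε, this]
  have hε2 : ∀ i, ε (3 * i + 2) = 0 := fun i => by
    have : (3 * i + 2) % 3 = 2 := by omega
    simp [ε, this]
  have htend : ∀ θ, Tendsto (fun j => t (e θ j)) atTop atTop := fun θ =>
    (ht.injective.comp (heinj θ)).nat_tendsto_atTop
  have t0 : Tendsto (fun i : ℕ => 3 * i) atTop atTop :=
    Function.Injective.nat_tendsto_atTop fun i j h => by simpa using h
  have t1 : Tendsto (fun i : ℕ => 3 * i + 1) atTop atTop :=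
    Function.Injective.nat_tendsto_atTop fun i j h => by simpa using h
  have t2 : Tendsto (fun i : ℕ => 3 * i + 2) atTop atTop :=
    Function.Injective.nat_tendsto_atTop fun i j h => by simpa using h
  have hdiff : ∀ {z : ℕ → ℝ} {L : ℝ}, Tendsto z atTop (𝓝 L) →
      Tendsto (fun i => z (3 * i) - z (3 * i + 2)) atTop (𝓝 0) ∧
      Tendsto (fun i => z (3 * i + 1) - z (3 * i + 2)) atTop (𝓝 0) := fun {z L} hz =>
    ⟨by simpa using (hz.comp t0).sub (hz.comp t2), by simpa using (hz.comp t1).sub (hz.comp t2)⟩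
  refine ⟨fun θ => ⟨F θ, fun i => D (e θ (3 * i)), fun i => D (e θ (3 * i + 1)),
    fun i => D (e θ (3 * i + 2))⟩, fun θ => ?_, ?_, ?_⟩
  · refine ⟨hFsign θ, (hFsupp θ).trans ?_, ?_, ⟨c / 2, by positivity, fun i => ?_⟩, fun m => ?_,
      fun m => ?_⟩
    · rintro _ ⟨j, rfl⟩
      exact ⟨_, rfl⟩
    · refine (infinite_range_of_injective (f := fun i : ℕ => D (e θ (3 * i)))
        fun i j h => ?_).mono ?_
      · simpa using hDe θ h
      · rintro _ ⟨i, rfl⟩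
        change F θ (D (e θ (3 * i))) ≠ 0
        rw [hFD, hε0, one_mul]
        rcases hsg' (D (e θ (3 * i))) with h | h <;> rw [h] <;> norm_num
    · have h0 := abs_le.mp (hpair θ (3 * i))
      have h1 := abs_le.mp (hpair θ (3 * i + 1))
      have h2 := abs_le.mp (hpair θ (3 * i + 2))
      rw [hε0] at h0
      rw [hε1] at h1
      rw [hε2] at h2
      have d0 := hdiag (D (e θ (3 * i)))
      have d1 := hdiag (D (e θ (3 * i + 1)))
      constructor <;> dsimp only <;> linarith
    · exact hdiff (((hla m).comp hu.tendsto_atTop).comp (htend θ))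
    · exact hdiff (((hlb m).comp hu.tendsto_atTop).comp (htend θ))
  · intro θ θ' hne
    refine ((head θ θ' hne).image D).subset ?_
    rintro m ⟨h1, h2⟩
    obtain ⟨i, rfl⟩ := hFsupp θ h1
    obtain ⟨j, hj⟩ := hFsupp θ' h2
    exact ⟨e θ i, ⟨⟨i, rfl⟩, j, hDinj hj⟩, rfl⟩
  · intro θ y
    obtain ⟨L, hL⟩ := hlu y
    have hL' : Tendsto (fun j => pairing (a (D (e θ j))) (f y)) atTop
        (𝓝 (L + pairing α (f y))) := by
      have := (hL.comp (htend θ)).add_const (pairing α (f y))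
      refine this.congr fun j => ?_
      rw [Function.comp_apply, pairing_sub_left (hsum _) hαs (hf y), sub_add_cancel]
    exact ⟨(hdiff hL').1.mono_left Nat.hyperfilter_le_atTop,
      (hdiff hL').2.mono_left Nat.hyperfilter_le_atTop⟩

/-- A family of sign functions is diagonalizing if every admissible pair of matrices is adapted to
a trisection given by a member of the family, and null at all the other members. -/
def IsDiagonalizing {I : Type*} (f : I → ℕ → ℝ) : Prop :=
  ∀ a b, IsAdmissible a b → ∃ (x : I) (A : ℕ → ℕ) (s : Trisection),
    s.f = f x ∧ s.IsAdapted A a b ∧ ∀ y, y ≠ x → s.IsNull a (f y)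

/-- There is an almost disjoint diagonalizing family of sign functions. -/
theorem exists_diagonalizing_family :
    ∃ (I : Type) (f : I → ℕ → ℝ), (∀ x m, f x m = 0 ∨ f x m = 1 ∨ f x m = -1) ∧
      (∀ x, (Function.support (f x)).Infinite) ∧
      (Pairwise fun x y => (Function.support (f x) ∩ Function.support (f y)).Finite) ∧
      IsDiagonalizing f := by
  classical
  let I := Cardinal.continuum.{0}.ord.ToType
  have hI : Cardinal.mk I = Cardinal.continuum := by simp [I]
  obtain ⟨e, heinj, head⟩ := exists_almostDisjoint_sequences
  have hB : Cardinal.mk (ℕ → Bool) = Cardinal.continuum := by simp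
  obtain ⟨κ⟩ : Nonempty (I ↪ (ℕ → Bool)) := (Cardinal.le_def _ _).mp (by rw [hI, hB])
  let Δ := {d : (ℕ → ℕ → ℝ) × (ℕ → ℕ → ℝ) // IsAdmissible d.1 d.2}
  have hΔ : Cardinal.mk Δ ≤ Cardinal.mk I := by
    refine (Cardinal.mk_subtype_le _).trans ?_
    rw [hI]
    simp [Cardinal.mk_real]
  have hne : Nonempty Δ := by
    refine ⟨⟨(fun n => Pi.single n 1, 0), 1, 1, one_pos, fun n => ?_, fun n => ?_, ?_, ?_⟩⟩
    · refine summable_of_ne_finset_zero (s := {n}) fun m hm => ?_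
      simp [Finset.notMem_singleton.mp hm]
    · rw [tsum_eq_single n fun m hm => by simp [hm]]
      simp
    · simp
    · simp
  obtain ⟨d, hd⟩ : ∃ d : I → Δ, Function.Surjective d := by
    obtain ⟨j⟩ := (Cardinal.le_def _ _).mp hΔ
    exact ⟨Function.invFun j, Function.invFun_surjective j.injective⟩
  have hdisj : ∀ (g : I → Trisection) (x y : I), x ≠ y →
      (g x).IsAdapted (e (κ x)) (d x).1.1 (d x).1.2 →
      (g y).IsAdapted (e (κ y)) (d y).1.1 (d y).1.2 →
      (Function.support (g x).f ∩ Function.support (g y).f).Finite := fun g x y hxy hx hy =>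
    (head _ _ (κ.injective.ne hxy)).subset
      (inter_subset_inter hx.support_subset hy.support_subset)
  have : Nonempty Trisection := ⟨⟨0, 0, 0, 0⟩⟩
  obtain ⟨g, hg, hR⟩ := exists_family_of_step
    (P := fun (x : I) (s : Trisection) => s.IsAdapted (e (κ x)) (d x).1.1 (d x).1.2)
    (R := fun y x s s' => s'.IsNull (d x).1.1 s.f ∧ s.IsNull (d y).1.1 s'.f) (by
    intro x g hg
    obtain ⟨σ, hσ, hσd, hσn⟩ := exists_trisections (d x).2 (heinj (κ x))
      (f := fun y : Iio x => (g y).f)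
      (fun y m => abs_le_one_of_sign ((hg y y.2).sign m))
      (fun y z hyz => hdisj g y z (Subtype.coe_injective.ne hyz) (hg y y.2) (hg z z.2))
    have hbad : ∀ y : Iio x, {θ | ¬ (g y).IsNull (d y).1.1 (σ θ).f}.Countable := fun y =>
      (hg y y.2).countable_not_isNull (d y).2
        (fun θ m => abs_le_one_of_sign ((hσ θ).sign m)) hσd
    obtain ⟨θ, hθ⟩ : ∃ θ, θ ∉ ⋃ y : Iio x, {θ | ¬ (g y).IsNull (d y).1.1 (σ θ).f} := by
      by_contra hcon
      push Not at hcon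
      have h1 : Cardinal.mk (ℕ → Bool) ≤ Cardinal.mk (Iio x) * Cardinal.aleph0 := by
        rw [← Cardinal.mk_univ, ← eq_univ_of_forall hcon]
        refine Cardinal.mk_iUnion_le_sum_mk.trans ?_
        refine (Cardinal.sum_le_sum _ (fun _ => Cardinal.aleph0) fun y =>
          Cardinal.le_aleph0_iff_set_countable.mpr (hbad y)).trans ?_
        simp
      refine absurd h1 (not_le.mpr ?_)
      rw [hB]
      exact Cardinal.mul_lt_of_lt Cardinal.aleph0_le_continuum
        ((Cardinal.mk_Iio_lt x (by rw [hI]; exact (Ordinal.type_toType _).symm)).trans_eq hI)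
        Cardinal.aleph0_lt_continuum
    simp only [mem_iUnion, mem_ofPred_eq, not_exists, not_not] at hθ
    exact ⟨σ θ, hσ θ, fun y hy => ⟨hσn θ ⟨y, hy⟩, hθ ⟨y, hy⟩⟩⟩)
  refine ⟨I, fun x => (g x).f, fun x => (hg x).sign, fun x => (hg x).support_infinite,
    fun x y hxy => hdisj g x y hxy (hg x) (hg y), fun a b hab => ?_⟩
  obtain ⟨x, hx⟩ := hd ⟨(a, b), hab⟩
  refine ⟨x, e (κ x), g x, rfl, by simpa [hx] using hg x, fun y hy => ?_⟩
  have hxa : (d x).1.1 = a := by rw [hx]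
  rw [← hxa]
  rcases lt_or_gt_of_ne hy with h | h
  · exact (hR x y h).1
  · exact (hR y x h).2

theorem IsCompact.finite_of_forall_isolated {X : Type*} [TopologicalSpace X] {s : Set X}
    (hs : IsCompact s) (h : ∀ x ∈ s, ∃ U : Set X, IsOpen U ∧ U ∩ s = {x}) : s.Finite :=
  hs.finite (isDiscrete_iff_forall_mem_exists_isOpen.mpr fun x hx => by
    obtain ⟨U, hU, hUs⟩ := h x hx
    exact ⟨U, hU, hUs⟩)

/-- A family of sets is almost disjoint if distinct members have finite intersection. -/
class IsAlmostDisjoint {N I : Type*} (B : I → Set N) : Prop where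
  finite_inter : ∀ ⦃x y⦄, x ≠ y → (B x ∩ B y).Finite

/-- The Mrówka space of a family `B` of subsets of `N`: the points of `N` are isolated, and for
each index `x` there is a point to which `B x` converges. -/
def PsiSpace {N I : Type*} (_ : I → Set N) : Type _ := N ⊕ I

namespace PsiSpace

variable {N I : Type*} {B : I → Set N}

instance : TopologicalSpace (PsiSpace B) where
  IsOpen U := ∀ x : I, (Sum.inr x : N ⊕ I) ∈ U → (B x \ {a | (Sum.inl a : N ⊕ I) ∈ U}).Finite
  isOpen_univ x _ := finite_empty.subset fun a ha => ha.2 trivial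
  isOpen_inter U V hU hV x hx := by
    refine ((hU x hx.1).union (hV x hx.2)).subset fun a ha => ?_
    by_cases h : (Sum.inl a : N ⊕ I) ∈ U
    · exact Or.inr ⟨ha.1, fun h' => ha.2 ⟨h, h'⟩⟩
    · exact Or.inl ⟨ha.1, h⟩
  isOpen_sUnion S hS x hx := by
    obtain ⟨U, hU, hxU⟩ := hx
    exact (hS U hU x hxU).subset fun a ha => ⟨ha.1, fun h => ha.2 ⟨U, hU, h⟩⟩

variable (B) in
/-- The isolated point attached to an element of `N`. -/
def pt (a : N) : PsiSpace B := Sum.inl a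

variable (B) in
/-- The limit point of the set `B x`. -/
def lim (x : I) : PsiSpace B := Sum.inr x

theorem pt_injective : Function.Injective (pt B) := Sum.inl_injective

theorem lim_injective : Function.Injective (lim B) := Sum.inr_injective

@[simp] theorem pt_inj {a b : N} : pt B a = pt B b ↔ a = b := pt_injective.eq_iff

@[simp] theorem lim_inj {x y : I} : lim B x = lim B y ↔ x = y := lim_injective.eq_iff

@[simp] theorem pt_ne_lim (a : N) (x : I) : pt B a ≠ lim B x := Sum.inl_ne_inr

@[simp] theorem lim_ne_pt (a : N) (x : I) : lim B x ≠ pt B a := Sum.inr_ne_inl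

theorem pt_or_lim (z : PsiSpace B) : (∃ a, z = pt B a) ∨ ∃ x, z = lim B x := by
  rcases z with a | x
  · exact Or.inl ⟨a, rfl⟩
  · exact Or.inr ⟨x, rfl⟩

theorem isOpen_iff {U : Set (PsiSpace B)} :
    IsOpen U ↔ ∀ x, lim B x ∈ U → (B x \ pt B ⁻¹' U).Finite := Iff.rfl

theorem isOpen_image_pt (A : Set N) : IsOpen (pt B '' A) := by
  rw [isOpen_iff]
  rintro x ⟨a, -, h⟩
  exact absurd h (pt_ne_lim a x)

theorem isOpen_singleton_pt (a : N) : IsOpen {pt B a} := by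
  simpa using isOpen_image_pt (B := B) {a}

theorem isClosed_image_pt {A : Set N} (hA : ∀ x, (B x ∩ A).Finite) : IsClosed (pt B '' A) := by
  rw [← isOpen_compl_iff, isOpen_iff]
  exact fun x _ => (hA x).subset fun a ha => ⟨ha.1, by simpa using ha.2⟩

variable (B) in
/-- The set `B x` together with its limit point. -/
def basicNhd (x : I) : Set (PsiSpace B) := insert (lim B x) (pt B '' B x)

@[simp] theorem pt_mem_basicNhd {a : N} {x : I} : pt B a ∈ basicNhd B x ↔ a ∈ B x := by
  simp [basicNhd]

@[simp] theorem lim_mem_basicNhd {x y : I} : lim B y ∈ basicNhd B x ↔ y = x := by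
  simp [basicNhd]

theorem isOpen_basicNhd (x : I) : IsOpen (basicNhd B x) := by
  rw [isOpen_iff]
  intro y hy
  obtain rfl := lim_mem_basicNhd.mp hy
  convert finite_empty
  ext a
  simp

theorem tendsto_pt_lim (x : I) : Tendsto (fun a : B x => pt B a) cofinite (𝓝 (lim B x)) := by
  rw [tendsto_nhds]
  intro U hU hx
  rw [mem_cofinite]
  refine ((hU x hx).preimage Subtype.coe_injective.injOn).subset fun a ha => ?_
  exact ⟨a.2, ha⟩

theorem isCompact_basicNhd (x : I) : IsCompact (basicNhd B x) := by
  have h := (tendsto_pt_lim (B := B) x).isCompact_insert_range_of_cofinite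
  convert h using 1
  rw [basicNhd, image_eq_range]

theorem isClosed_basicNhd [IsAlmostDisjoint B] (x : I) : IsClosed (basicNhd B x) := by
  rw [← isOpen_compl_iff, isOpen_iff]
  intro y hy
  have hyx : y ≠ x := by simpa using hy
  exact (IsAlmostDisjoint.finite_inter hyx).subset fun a ha => ⟨ha.1, by simpa using ha.2⟩

theorem isClosed_singleton_pt (a : N) : IsClosed {pt B a} := by
  simpa using isClosed_image_pt (B := B) (A := {a}) fun x => (finite_singleton a).inter_of_right _

instance [IsAlmostDisjoint B] : T2Space (PsiSpace B) := by
  have key : ∀ {z w : PsiSpace B} {C : Set (PsiSpace B)}, IsOpen C → IsClosed C → z ∈ C → w ∉ C →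
      (∃ U V : Set (PsiSpace B), IsOpen U ∧ IsOpen V ∧ z ∈ U ∧ w ∈ V ∧ Disjoint U V) ∧
      ∃ U V : Set (PsiSpace B), IsOpen U ∧ IsOpen V ∧ w ∈ U ∧ z ∈ V ∧ Disjoint U V :=
    fun {z w C} h1 h2 hz hw => ⟨⟨C, Cᶜ, h1, h2.isOpen_compl, hz, hw, disjoint_compl_right⟩,
      ⟨Cᶜ, C, h2.isOpen_compl, h1, hw, hz, disjoint_compl_left⟩⟩
  refine ⟨fun z w hzw => ?_⟩
  rcases pt_or_lim z with ⟨a, rfl⟩ | ⟨x, rfl⟩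
  · exact (key (isOpen_singleton_pt a) (isClosed_singleton_pt a) rfl (Ne.symm hzw)).1
  · rcases pt_or_lim w with ⟨a, rfl⟩ | ⟨y, rfl⟩
    · exact (key (isOpen_singleton_pt a) (isClosed_singleton_pt a) rfl hzw).2
    · exact (key (isOpen_basicNhd x) (isClosed_basicNhd x) (by simp)
        (by simpa using Ne.symm hzw)).1

instance : WeaklyLocallyCompactSpace (PsiSpace B) where
  exists_compact_mem_nhds z := by
    rcases pt_or_lim z with ⟨a, rfl⟩ | ⟨x, rfl⟩
    · exact ⟨{pt B a}, isCompact_singleton, (isOpen_singleton_pt a).mem_nhds rfl⟩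
    · exact ⟨_, isCompact_basicNhd x, (isOpen_basicNhd x).mem_nhds (by simp)⟩

theorem finite_of_isCompact_image_pt {A : Set N} (hA : IsCompact (pt B '' A)) : A.Finite := by
  refine (hA.finite_of_forall_isolated ?_).of_finite_image pt_injective.injOn
  rintro _ ⟨a, ha, rfl⟩
  exact ⟨{pt B a}, isOpen_singleton_pt a, by simpa using ha⟩

theorem tendsto_pt_infty [IsAlmostDisjoint B] {ι : Type*} {u : ι → N} (hu : Function.Injective u)
    (h : ∀ x, (B x ∩ range u).Finite) :
    Tendsto (fun i => (pt B (u i) : OnePoint (PsiSpace B))) cofinite (𝓝 OnePoint.infty) := by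
  refine OnePoint.tendsto_coe_infty.comp (hasBasis_coclosedCompact.tendsto_right_iff.mpr ?_)
  rintro K ⟨-, hK⟩
  have h1 : IsCompact (pt B '' {a | a ∈ range u ∧ pt B a ∈ K}) := by
    have := hK.inter_left (isClosed_image_pt h)
    convert this using 1
    ext z
    simp only [mem_image, mem_inter_iff, mem_ofPred_eq]
    constructor
    · rintro ⟨a, ha, rfl⟩
      exact ⟨⟨a, ha.1, rfl⟩, ha.2⟩
    · rintro ⟨⟨a, ha, rfl⟩, ha'⟩
      exact ⟨a, ⟨ha, ha'⟩, rfl⟩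
  have h2 := (finite_of_isCompact_image_pt h1).preimage hu.injOn
  rw [eventually_cofinite]
  exact h2.subset fun i hi => ⟨⟨i, rfl⟩, by simpa using hi⟩

theorem onePoint_cases (z : OnePoint (PsiSpace B)) :
    z = OnePoint.infty ∨ (∃ a, z = (pt B a : OnePoint (PsiSpace B))) ∨
      ∃ x, z = (lim B x : OnePoint (PsiSpace B)) := by
  induction z using OnePoint.rec with
  | infty => exact Or.inl rfl
  | coe z =>
    rcases pt_or_lim z with ⟨a, rfl⟩ | ⟨x, rfl⟩
    · exact Or.inr (Or.inl ⟨a, rfl⟩)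
    · exact Or.inr (Or.inr ⟨x, rfl⟩)

theorem isOpen_singleton_coe_pt (a : N) : IsOpen {(pt B a : OnePoint (PsiSpace B))} := by
  simpa using OnePoint.isOpen_image_coe.mpr (isOpen_singleton_pt (B := B) a)

theorem isOpen_coe_basicNhd (x : I) :
    IsOpen ((↑) '' basicNhd B x : Set (OnePoint (PsiSpace B))) :=
  OnePoint.isOpen_image_coe.mpr (isOpen_basicNhd x)

theorem isScatteredSpace_onePoint : IsScatteredSpace (OnePoint (PsiSpace B)) := by
  rintro S ⟨z, hz⟩
  by_cases h1 : ∃ a, (pt B a : OnePoint (PsiSpace B)) ∈ S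
  · obtain ⟨a, ha⟩ := h1
    exact ⟨_, ha, _, isOpen_singleton_coe_pt a, by simpa using ha⟩
  by_cases h2 : ∃ x, (lim B x : OnePoint (PsiSpace B)) ∈ S
  · obtain ⟨x, hx⟩ := h2
    refine ⟨_, hx, _, isOpen_coe_basicNhd x, Subset.antisymm ?_ ?_⟩
    · rintro _ ⟨⟨w, hw, rfl⟩, hwS⟩
      rcases hw with rfl | ⟨a, -, rfl⟩
      · rfl
      · exact absurd ⟨a, hwS⟩ h1
    · rintro _ rfl
      exact ⟨⟨_, by simp, rfl⟩, hx⟩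
  refine ⟨z, hz, univ, isOpen_univ, ?_⟩
  have h : ∀ w ∈ S, w = OnePoint.infty := fun w hw => by
    rcases onePoint_cases w with rfl | ⟨a, rfl⟩ | ⟨x, rfl⟩
    · rfl
    · exact absurd ⟨a, hw⟩ h1
    · exact absurd ⟨x, hw⟩ h2
  ext w
  simp only [univ_inter, mem_singleton_iff]
  exact ⟨fun hw => (h w hw).trans (h z hz).symm, fun hw => hw ▸ hz⟩

theorem separableSpace_onePoint [Countable N] (hB : ∀ x, (B x).Infinite) :
    TopologicalSpace.SeparableSpace (OnePoint (PsiSpace B)) := by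
  set D : Set (OnePoint (PsiSpace B)) :=
    insert OnePoint.infty (range fun a => (pt B a : OnePoint (PsiSpace B)))
  refine ⟨D, (countable_range _).insert _, fun z => ?_⟩
  rcases onePoint_cases z with rfl | ⟨a, rfl⟩ | ⟨x, rfl⟩
  · exact subset_closure (mem_insert _ _)
  · exact subset_closure (Or.inr ⟨a, rfl⟩)
  · have := (hB x).to_subtype
    exact mem_closure_of_tendsto
      ((OnePoint.continuous_coe.tendsto _).comp (tendsto_pt_lim (B := B) x))
      (Eventually.of_forall fun a => Or.inr ⟨a, rfl⟩)

theorem finite_of_isCompact_subset_pt {A : Set (OnePoint (PsiSpace B))} (hA : IsCompact A)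
    (h : A ⊆ range fun a => (pt B a : OnePoint (PsiSpace B))) : A.Finite := by
  refine hA.finite_of_forall_isolated fun z hz => ?_
  obtain ⟨a, rfl⟩ := h hz
  exact ⟨_, isOpen_singleton_coe_pt a, by simpa using hz⟩

theorem finite_setOf_lim_mem {A : Set (OnePoint (PsiSpace B))} (hA : IsClosed A)
    (h : OnePoint.infty ∉ A) : {x | (lim B x : OnePoint (PsiSpace B)) ∈ A}.Finite := by
  set P : Set (OnePoint (PsiSpace B)) := range fun a => (pt B a : OnePoint (PsiSpace B)) with hP
  have hPo : IsOpen P := by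
    rw [hP, ← iUnion_singleton_eq_range]
    exact isOpen_iUnion isOpen_singleton_coe_pt
  have hfin : (A \ P).Finite := by
    refine (hA.sdiff hPo).isCompact.finite_of_forall_isolated fun z hz => ?_
    rcases onePoint_cases z with rfl | ⟨a, rfl⟩ | ⟨x, rfl⟩
    · exact absurd hz.1 h
    · exact absurd ⟨a, rfl⟩ hz.2
    · refine ⟨_, isOpen_coe_basicNhd x, Subset.antisymm ?_ ?_⟩
      · rintro _ ⟨⟨w, hw, rfl⟩, hwS⟩
        rcases hw with rfl | ⟨a, -, rfl⟩
        · rfl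
        · exact absurd ⟨a, rfl⟩ hwS.2
      · rintro _ rfl
        exact ⟨⟨_, by simp, rfl⟩, hz⟩
  refine (hfin.preimage (OnePoint.coe_injective.comp lim_injective).injOn).subset fun x hx => ?_
  exact ⟨hx, by simp [hP]⟩

section Indicator

variable [IsAlmostDisjoint B]

/-- The indicator function of a compact open subset of a Mrówka space, as a continuous function on
the one-point compactification. -/
noncomputable def indicatorFun (C : Set (PsiSpace B)) (hC : IsOpen C) (hC' : IsCompact C) :
    C(OnePoint (PsiSpace B), ℝ) where
  toFun := indicator ((↑) '' C) 1
  continuous_toFun := by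
    have h : IsClopen ((↑) '' C : Set (OnePoint (PsiSpace B))) :=
      ⟨OnePoint.isClosed_image_coe.mpr ⟨hC'.isClosed, hC'⟩, OnePoint.isOpen_image_coe.mpr hC⟩
    exact continuous_const.indicator (by simp [h.frontier_eq])

variable (B) in
/-- The indicator function of the isolated point `pt B a`. -/
noncomputable def ptFun (a : N) : C(OnePoint (PsiSpace B), ℝ) :=
  indicatorFun {pt B a} (isOpen_singleton_pt a) isCompact_singleton

variable (B) in
/-- The indicator function of `basicNhd B x`. -/
noncomputable def limFun (x : I) : C(OnePoint (PsiSpace B), ℝ) :=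
  indicatorFun (basicNhd B x) (isOpen_basicNhd x) (isCompact_basicNhd x)

open Classical in
theorem indicatorFun_coe {C : Set (PsiSpace B)} (hC : IsOpen C) (hC' : IsCompact C)
    (z : PsiSpace B) : indicatorFun C hC hC' z = if z ∈ C then 1 else 0 := by
  simp [indicatorFun, indicator_apply]

@[simp] theorem indicatorFun_infty {C : Set (PsiSpace B)} (hC : IsOpen C) (hC' : IsCompact C) :
    indicatorFun C hC hC' OnePoint.infty = 0 := by
  simp [indicatorFun]

@[simp] theorem ptFun_infty (a : N) : ptFun B a OnePoint.infty = 0 := indicatorFun_infty _ _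

@[simp] theorem ptFun_lim (a : N) (x : I) : ptFun B a (lim B x) = 0 := by
  simp [ptFun, indicatorFun_coe]

open Classical in
theorem ptFun_pt (a b : N) : ptFun B a (pt B b) = if b = a then 1 else 0 := by
  simp [ptFun, indicatorFun_coe]

@[simp] theorem limFun_infty (x : I) : limFun B x OnePoint.infty = 0 := indicatorFun_infty _ _

open Classical in
theorem limFun_lim (x y : I) : limFun B x (lim B y) = if y = x then 1 else 0 := by
  simp [limFun, indicatorFun_coe]

open Classical in
theorem limFun_pt (x : I) (a : N) : limFun B x (pt B a) = if a ∈ B x then 1 else 0 := by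
  simp [limFun, indicatorFun_coe]

/-- The constants together with the indicator functions of isolated points and of basic
neighbourhoods span a dense subspace. -/
theorem mem_of_indicators_mem {Z : Submodule ℝ C(OnePoint (PsiSpace B), ℝ)}
    (hZ : IsClosed (Z : Set C(OnePoint (PsiSpace B), ℝ))) (h1 : 1 ∈ Z) (hpt : ∀ a, ptFun B a ∈ Z)
    (hlim : ∀ x, limFun B x ∈ Z) (h : C(OnePoint (PsiSpace B), ℝ)) : h ∈ Z := by
  classical
  refine hZ.closure_subset (Metric.mem_closure_iff.mpr fun ε hε => ?_)
  have hcl : ∀ g : C(OnePoint (PsiSpace B), ℝ), IsClosed {z | ε / 2 ≤ |g z|} := fun g =>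
    isClosed_le continuous_const (g.continuous.abs)
  set h0 := h - h OnePoint.infty • (1 : C(OnePoint (PsiSpace B), ℝ)) with hh0
  have h0i : h0 OnePoint.infty = 0 := by simp [hh0]
  have hG := finite_setOf_lim_mem (hcl h0) (by simp [h0i, hε])
  set g := h0 - ∑ y ∈ hG.toFinset, h0 (lim B y) • limFun B y with hg
  have hgi : g OnePoint.infty = 0 := by simp [hg, h0i, ContinuousMap.sum_apply]
  have hgl : ∀ x, |g (lim B x)| < ε / 2 := by
    intro x
    have : g (lim B x) = if x ∈ hG.toFinset then 0 else h0 (lim B x) := by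
      simp only [hg, ContinuousMap.sub_apply, ContinuousMap.sum_apply, ContinuousMap.smul_apply,
        limFun_lim, smul_eq_mul, mul_ite, mul_one, mul_zero, Finset.sum_ite_eq]
      split_ifs <;> simp
    rw [this]
    split_ifs with hx
    · simpa using hε
    · simpa using hx
  have hF : {z | ε / 2 ≤ |g z|}.Finite := by
    refine finite_of_isCompact_subset_pt (hcl g).isCompact fun z hz => ?_
    rcases onePoint_cases z with rfl | ⟨a, rfl⟩ | ⟨x, rfl⟩
    · have : ε / 2 ≤ |g OnePoint.infty| := hz
      rw [hgi, abs_zero] at this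
      linarith
    · exact ⟨a, rfl⟩
    · exact absurd hz (hgl x).not_ge
  have hH : {a | ε / 2 ≤ |g (pt B a)|}.Finite :=
    Set.Finite.preimage (f := fun a => (pt B a : OnePoint (PsiSpace B)))
      (OnePoint.coe_injective.comp pt_injective).injOn hF
  set k := g - ∑ a ∈ hH.toFinset, g (pt B a) • ptFun B a with hk
  have hki : k OnePoint.infty = 0 := by simp [hk, hgi, ContinuousMap.sum_apply]
  have hkl : ∀ x, k (lim B x) = g (lim B x) := by simp [hk, ContinuousMap.sum_apply]
  have hkp : ∀ a, |k (pt B a)| < ε / 2 := by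
    intro a
    have : k (pt B a) = if a ∈ hH.toFinset then 0 else g (pt B a) := by
      simp only [hk, ContinuousMap.sub_apply, ContinuousMap.sum_apply, ContinuousMap.smul_apply,
        ptFun_pt, smul_eq_mul, mul_ite, mul_one, mul_zero, Finset.sum_ite_eq]
      split_ifs <;> simp
    rw [this]
    split_ifs with hx
    · simpa using hε
    · simpa using hx
  refine ⟨h - k, ?_, ?_⟩
  · have : h - k = h OnePoint.infty • (1 : C(OnePoint (PsiSpace B), ℝ)) +
        ∑ y ∈ hG.toFinset, h0 (lim B y) • limFun B y +
        ∑ a ∈ hH.toFinset, g (pt B a) • ptFun B a := by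
      linear_combination -hk - hg - hh0
    rw [this]
    exact add_mem (add_mem (Z.smul_mem _ h1) (sum_mem fun y _ => Z.smul_mem _ (hlim y)))
      (sum_mem fun a _ => Z.smul_mem _ (hpt a))
  · rw [dist_eq_norm, sub_sub_cancel]
    refine lt_of_le_of_lt ((ContinuousMap.norm_le _ (half_pos hε).le).mpr fun z => ?_)
      (half_lt_self hε)
    rw [Real.norm_eq_abs]
    rcases onePoint_cases z with rfl | ⟨a, rfl⟩ | ⟨x, rfl⟩
    · rw [hki, abs_zero]; positivity
    · exact (hkp a).le
    · rw [hkl]; exact (hgl x).le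

end Indicator

end PsiSpace

theorem nonempty_continuousLinearEquiv_of_bijective {E F : Type*} [NormedAddCommGroup E]
    [NormedSpace ℝ E] [CompleteSpace E] [NormedAddCommGroup F] [NormedSpace ℝ F] [CompleteSpace F]
    (J : E →L[ℝ] F) (hker : J.ker = ⊥) (hrange : J.range = ⊤) : Nonempty (F ≃L[ℝ] E) :=
  ⟨(ContinuousLinearEquiv.ofBijective J hker hrange).symm⟩

namespace PsiSpace

variable {I : Type*} {B : I → Set (ℕ × Bool)}

variable (B) in
/-- The map collapsing each pair of isolated points `(n, true)`, `(n, false)` to `n` and every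
other point to infinity. -/
def collapse (z : OnePoint (PsiSpace B)) : OnePoint ℕ :=
  z.elim OnePoint.infty fun w => Sum.elim (fun a => (a.1 : OnePoint ℕ)) (fun _ => OnePoint.infty) w

@[simp] theorem collapse_infty : collapse B OnePoint.infty = OnePoint.infty := rfl

@[simp] theorem collapse_pt (a : ℕ × Bool) : collapse B (pt B a) = (a.1 : OnePoint ℕ) := rfl

@[simp] theorem collapse_lim (x : I) : collapse B (lim B x) = OnePoint.infty := rfl

theorem continuous_collapse [IsAlmostDisjoint B] : Continuous (collapse B) := by
  refine continuous_def.mpr fun U hU => ?_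
  by_cases h : OnePoint.infty ∈ U
  · have hfin : ((↑) ⁻¹' U : Set ℕ)ᶜ.Finite :=
      isCompact_iff_finite.mp ((OnePoint.isOpen_iff_of_mem h).mp hU).2
    have hfin' := ((hfin.prod (Set.finite_univ (α := Bool))).image
      fun a => (pt B a : OnePoint (PsiSpace B)))
    rw [← isClosed_compl_iff]
    refine (hfin'.subset fun z hz => ?_).isClosed
    rcases onePoint_cases z with rfl | ⟨a, rfl⟩ | ⟨x, rfl⟩
    · exact absurd h hz
    · exact ⟨a, ⟨hz, mem_univ _⟩, rfl⟩
    · exact absurd h hz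
  · have : collapse B ⁻¹' U = ⋃ a ∈ {a : ℕ × Bool | (a.1 : OnePoint ℕ) ∈ U},
        {(pt B a : OnePoint (PsiSpace B))} := by
      ext z
      simp only [mem_preimage, mem_iUnion, mem_singleton_iff, mem_ofPred_eq, exists_prop]
      constructor
      · intro hz
        rcases onePoint_cases z with rfl | ⟨a, rfl⟩ | ⟨x, rfl⟩
        · exact absurd hz h
        · exact ⟨a, hz, rfl⟩
        · exact absurd hz h
      · rintro ⟨a, ha, rfl⟩
        exact ha
    rw [this]
    exact isOpen_biUnion fun a _ => isOpen_singleton_coe_pt a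

variable (B) in
/-- The continuous functions which do not distinguish the isolated points `(n, true)` and
`(n, false)`. -/
def evenSubspace : Submodule ℝ C(OnePoint (PsiSpace B), ℝ) where
  carrier := {h | ∀ n, h (pt B (n, true)) = h (pt B (n, false))}
  add_mem' {g h} hg hh n := by simp [hg n, hh n]
  zero_mem' n := rfl
  smul_mem' c h hh n := by simp [hh n]

theorem mem_evenSubspace {h : C(OnePoint (PsiSpace B), ℝ)} :
    h ∈ evenSubspace B ↔ ∀ n, h (pt B (n, true)) = h (pt B (n, false)) := Iff.rfl

theorem isClosed_evenSubspace :
    IsClosed (evenSubspace B : Set C(OnePoint (PsiSpace B), ℝ)) := by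
  have : (evenSubspace B : Set C(OnePoint (PsiSpace B), ℝ)) =
      ⋂ n, {h | h (pt B (n, true)) = h (pt B (n, false))} := by
    ext h
    simp [mem_evenSubspace]
  rw [this]
  exact isClosed_iInter fun n => isClosed_eq (continuous_eval_const _)
    (continuous_eval_const _)

theorem apply_pt_eq_of_mem_evenSubspace {h : C(OnePoint (PsiSpace B), ℝ)}
    (hh : h ∈ evenSubspace B) (n : ℕ) (b b' : Bool) : h (pt B (n, b)) = h (pt B (n, b')) := by
  cases b <;> cases b' <;> simp [hh n]

theorem apply_lim_eq_of_mem_evenSubspace [IsAlmostDisjoint B] (hinf : ∀ x, (B x).Infinite)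
    (hflip : ∀ x y, (B x ∩ {a | (a.1, !a.2) ∈ B y}).Finite)
    {h : C(OnePoint (PsiSpace B), ℝ)} (hh : h ∈ evenSubspace B) (x : I) :
    h (lim B x) = h OnePoint.infty := by
  have := (hinf x).to_subtype
  have h1 : Tendsto (fun a : B x => h (pt B a)) cofinite (𝓝 (h (lim B x))) :=
    (h.continuous.tendsto _).comp ((OnePoint.continuous_coe.tendsto _).comp (tendsto_pt_lim x))
  have h2 : Tendsto (fun a : B x => h (pt B (a.1.1, !a.1.2))) cofinite
      (𝓝 (h OnePoint.infty)) := by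
    refine (h.continuous.tendsto _).comp (tendsto_pt_infty
      (u := fun a : B x => (a.1.1, !a.1.2)) ?_ fun y => (hflip y x).subset ?_)
    · rintro ⟨⟨n, b⟩, hb⟩ ⟨⟨m, c⟩, hc⟩ hbc
      simpa using hbc
    · rintro _ ⟨hy, a, rfl⟩
      exact ⟨hy, by simp⟩
  refine tendsto_nhds_unique h1 (h2.congr fun a => ?_)
  exact apply_pt_eq_of_mem_evenSubspace hh _ _ _

theorem tendsto_apply_pt_of_mem_evenSubspace [IsAlmostDisjoint B] (hinf : ∀ x, (B x).Infinite)
    (hflip : ∀ x y, (B x ∩ {a | (a.1, !a.2) ∈ B y}).Finite)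
    {h : C(OnePoint (PsiSpace B), ℝ)} (hh : h ∈ evenSubspace B) :
    Tendsto (fun n => h (pt B (n, true))) atTop (𝓝 (h OnePoint.infty)) := by
  rw [← Nat.cofinite_eq_atTop, Metric.tendsto_nhds]
  intro ε hε
  rw [eventually_cofinite]
  have hcl : IsClosed {z | ε ≤ dist (h z) (h OnePoint.infty)} :=
    isClosed_le continuous_const (h.continuous.dist continuous_const)
  have hfin : {z | ε ≤ dist (h z) (h OnePoint.infty)}.Finite := by
    refine finite_of_isCompact_subset_pt hcl.isCompact fun z hz => ?_
    rcases onePoint_cases z with rfl | ⟨a, rfl⟩ | ⟨x, rfl⟩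
    · have : ε ≤ dist (h OnePoint.infty) (h OnePoint.infty) := hz
      rw [dist_self] at this
      exact absurd hε this.not_gt
    · exact ⟨a, rfl⟩
    · have : ε ≤ dist (h (lim B x)) (h OnePoint.infty) := hz
      rw [apply_lim_eq_of_mem_evenSubspace hinf hflip hh, dist_self] at this
      exact absurd hε this.not_gt
  refine (Set.Finite.preimage (f := fun n : ℕ => (pt B (n, true) : OnePoint (PsiSpace B)))
    (Function.Injective.injOn ?_) hfin).subset fun n hn => not_lt.mp hn
  exact (OnePoint.coe_injective.comp pt_injective).comp fun n m h => (Prod.mk.inj h).1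

theorem tendsto_atTop_zeroAtInfty (g : C₀(ℕ, ℝ)) : Tendsto g atTop (𝓝 0) := by
  simpa [Nat.cofinite_eq_atTop] using zero_at_infty g

variable (B) in
/-- The isomorphic embedding of `c₀` onto `evenSubspace B`. -/
noncomputable def ofZeroAtInfty [IsAlmostDisjoint B] :
    C₀(ℕ, ℝ) →L[ℝ] C(OnePoint (PsiSpace B), ℝ) :=
  LinearMap.mkContinuous
    { toFun g := (OnePoint.continuousMapMkNat (fun n => g 0 + g (n + 1)) (g 0) (by
        simpa using tendsto_const_nhds.add
          ((tendsto_add_atTop_iff_nat 1).mpr (tendsto_atTop_zeroAtInfty g)))).comp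
        ⟨collapse B, continuous_collapse⟩
      map_add' g h := by
        ext z
        rcases onePoint_cases z with rfl | ⟨a, rfl⟩ | ⟨x, rfl⟩
        · rfl
        · exact add_add_add_comm _ _ _ _
        · rfl
      map_smul' c g := by
        ext z
        rcases onePoint_cases z with rfl | ⟨a, rfl⟩ | ⟨x, rfl⟩
        · rfl
        · exact (mul_add c _ _).symm
        · rfl } 2 (fun g => by
    have hg : ∀ n, ‖g n‖ ≤ ‖g‖ := fun n => g.toBCF.norm_coe_le_norm n
    refine (ContinuousMap.norm_le _ (by positivity)).mpr fun z => ?_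
    rcases onePoint_cases z with rfl | ⟨a, rfl⟩ | ⟨x, rfl⟩
    · exact (hg 0).trans (by linarith [norm_nonneg g])
    · exact (norm_add_le (g 0) (g (a.1 + 1))).trans (by linarith [hg 0, hg (a.1 + 1)])
    · exact (hg 0).trans (by linarith [norm_nonneg g]))

@[simp] theorem ofZeroAtInfty_infty [IsAlmostDisjoint B] (g : C₀(ℕ, ℝ)) :
    ofZeroAtInfty B g OnePoint.infty = g 0 := rfl

@[simp] theorem ofZeroAtInfty_pt [IsAlmostDisjoint B] (g : C₀(ℕ, ℝ)) (a : ℕ × Bool) :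
    ofZeroAtInfty B g (pt B a) = g 0 + g (a.1 + 1) := rfl

@[simp] theorem ofZeroAtInfty_lim [IsAlmostDisjoint B] (g : C₀(ℕ, ℝ)) (x : I) :
    ofZeroAtInfty B g (lim B x) = g 0 := rfl

theorem nonempty_evenSubspace_equiv [IsAlmostDisjoint B] (hinf : ∀ x, (B x).Infinite)
    (hflip : ∀ x y, (B x ∩ {a | (a.1, !a.2) ∈ B y}).Finite) :
    Nonempty (evenSubspace B ≃L[ℝ] C₀(ℕ, ℝ)) := by
  have : CompleteSpace (evenSubspace B) := isClosed_evenSubspace.completeSpace_coe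
  let J : C₀(ℕ, ℝ) →L[ℝ] evenSubspace B :=
    (ofZeroAtInfty B).codRestrict (evenSubspace B) fun g n => rfl
  have hker : J.ker = ⊥ := by
    refine LinearMap.ker_eq_bot'.mpr fun g hg => ?_
    have hg' : ofZeroAtInfty B g = 0 := congrArg Subtype.val hg
    have h0 : g 0 = 0 := by simpa using congrArg (fun h => h OnePoint.infty) hg'
    ext n
    cases n with
    | zero => exact h0
    | succ n =>
      have h1 : g 0 + g (n + 1) = 0 := congrArg (fun h => h (pt B (n, true))) hg'
      simpa [h0] using h1
  have hrange : J.range = ⊤ := by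
    refine LinearMap.range_eq_top.mpr fun h => ?_
    obtain ⟨h, hh⟩ := h
    let u : ℕ → ℝ
      | 0 => h OnePoint.infty
      | n + 1 => h (pt B (n, true)) - h OnePoint.infty
    have hu : Tendsto u atTop (𝓝 0) := by
      refine (tendsto_add_atTop_iff_nat 1).mp ?_
      simpa using (tendsto_apply_pt_of_mem_evenSubspace hinf hflip hh).sub_const
        (h OnePoint.infty)
    refine ⟨⟨⟨u, continuous_of_discreteTopology⟩, by simpa [Nat.cofinite_eq_atTop] using hu⟩,
      Subtype.ext ?_⟩
    ext z
    rcases onePoint_cases z with rfl | ⟨a, rfl⟩ | ⟨x, rfl⟩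
    · rfl
    · change h OnePoint.infty + (h (pt B (a.1, true)) - h OnePoint.infty) = h (pt B a)
      rw [add_sub_cancel]
      exact apply_pt_eq_of_mem_evenSubspace hh _ _ _
    · exact (apply_lim_eq_of_mem_evenSubspace hinf hflip hh x).symm
  exact nonempty_continuousLinearEquiv_of_bijective (F := evenSubspace B) J hker hrange

end PsiSpace

/-- The sets of pairs `(n, b)` such that `f x n` is the sign encoded by the boolean `b`. -/
def signFamily {I : Type*} (f : I → ℕ → ℝ) (x : I) : Set (ℕ × Bool) :=
  {a | f x a.1 = if a.2 then 1 else -1}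

section SignFamily

variable {I : Type*} {f : I → ℕ → ℝ}

theorem mem_support_of_mem_signFamily {x : I} {a : ℕ × Bool} (h : a ∈ signFamily f x) :
    a.1 ∈ Function.support (f x) := by
  rw [Function.mem_support, show f x a.1 = _ from h]
  split_ifs <;> norm_num

theorem isAlmostDisjoint_signFamily
    (had : Pairwise fun x y => (Function.support (f x) ∩ Function.support (f y)).Finite) :
    IsAlmostDisjoint (signFamily f) where
  finite_inter _ _ hxy := ((had hxy).prod (Set.finite_univ (α := Bool))).subset fun _ ha =>
    ⟨⟨mem_support_of_mem_signFamily ha.1, mem_support_of_mem_signFamily ha.2⟩, mem_univ _⟩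

theorem finite_signFamily_inter_flip
    (had : Pairwise fun x y => (Function.support (f x) ∩ Function.support (f y)).Finite) (x y : I) :
    (signFamily f x ∩ {a | (a.1, !a.2) ∈ signFamily f y}).Finite := by
  by_cases hxy : x = y
  · subst hxy
    convert finite_empty
    ext ⟨n, b⟩
    simp only [signFamily, mem_inter_iff, mem_ofPred_eq, mem_empty_iff_false, iff_false, not_and]
    intro h h'
    rw [h] at h'
    cases b <;> norm_num at h'
  · exact ((had hxy).prod (Set.finite_univ (α := Bool))).subset fun a ha =>
      ⟨⟨mem_support_of_mem_signFamily ha.1,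
        mem_support_of_mem_signFamily (a := (a.1, !a.2)) ha.2⟩, mem_univ _⟩

theorem infinite_signFamily (hsign : ∀ x m, f x m = 0 ∨ f x m = 1 ∨ f x m = -1)
    (hinf : ∀ x, (Function.support (f x)).Infinite) (x : I) : (signFamily f x).Infinite := by
  refine Set.Infinite.of_image Prod.fst ((hinf x).mono fun m hm => ?_)
  rcases hsign x m with h | h | h
  · exact absurd h hm
  · exact ⟨(m, true), by simpa [signFamily] using h, rfl⟩
  · exact ⟨(m, false), by simpa [signFamily] using h, rfl⟩

end SignFamily

theorem abs_sum_mul_le_one {ι : Type*} {s : Finset ι} {u v : ι → ℝ} (hu : ∀ i ∈ s, |u i| ≤ 1)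
    (hv : ∀ i ∈ s, |v i| ≤ 1) (h : ∀ i ∈ s, ∀ j ∈ s, v i ≠ 0 → v j ≠ 0 → i = j) :
    |∑ i ∈ s, u i * v i| ≤ 1 := by
  by_cases h0 : ∃ i ∈ s, v i ≠ 0
  · obtain ⟨i, hi, hvi⟩ := h0
    rw [Finset.sum_eq_single_of_mem i hi fun j hj hji => ?_]
    · rw [abs_mul]
      exact mul_le_one₀ (hu i hi) (abs_nonneg _) (hv i hi)
    · rw [mul_eq_zero]
      by_contra! hcon
      exact hji (h j hj i hi hcon.2 hvi)
  · push Not at h0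
    rw [Finset.sum_eq_zero fun i hi => by rw [h0 i hi, mul_zero]]
    simp

theorem abs_sign_le_one (x : ℝ) : |(SignType.sign x : ℝ)| ≤ 1 := by
  rcases lt_trichotomy x 0 with h | h | h
  · simp [h]
  · simp [h]
  · simp [h]

namespace PsiSpace

theorem one_mem_evenSubspace {I : Type*} {B : I → Set (ℕ × Bool)} :
    (1 : C(OnePoint (PsiSpace B), ℝ)) ∈ evenSubspace B := fun _ => rfl

section Functional

variable {I : Type*} {B : I → Set (ℕ × Bool)} [IsAlmostDisjoint B]
  {μ : C(OnePoint (PsiSpace B), ℝ) →L[ℝ] ℝ} {C : ℝ}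

theorem ptFun_add_ptFun_mem_evenSubspace (m : ℕ) :
    ptFun B (m, true) + ptFun B (m, false) ∈ evenSubspace B := by
  intro n
  by_cases h : n = m <;> simp [ptFun_pt, h]

theorem apply_ptFun_false (hμ : ∀ h ∈ evenSubspace B, μ h = 0) (m : ℕ) :
    μ (ptFun B (m, false)) = -μ (ptFun B (m, true)) := by
  have := hμ _ (ptFun_add_ptFun_mem_evenSubspace m)
  rw [map_add] at this
  linarith

theorem sum_abs_apply_ptFun_le (hC : ∀ h, |μ h| ≤ C * ‖h‖) (s : Finset ℕ) :
    ∑ m ∈ s, |μ (ptFun B (m, true))| ≤ C := by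
  have hC0 : 0 ≤ C := by simpa using (abs_nonneg _).trans (hC 1)
  set h := ∑ m ∈ s, (SignType.sign (μ (ptFun B (m, true))) : ℝ) • ptFun B (m, true) with hh
  have h1 : μ h = ∑ m ∈ s, |μ (ptFun B (m, true))| := by
    rw [hh, map_sum]
    exact Finset.sum_congr rfl fun m _ => by rw [map_smul, smul_eq_mul, sign_mul_self]
  have h2 : ‖h‖ ≤ 1 := by
    refine (ContinuousMap.norm_le _ zero_le_one).mpr fun z => ?_
    rw [Real.norm_eq_abs, hh, ContinuousMap.sum_apply]
    simp only [ContinuousMap.smul_apply, smul_eq_mul]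
    refine abs_sum_mul_le_one (fun m _ => abs_sign_le_one _) ?_ ?_
    · intro m _
      rcases onePoint_cases z with rfl | ⟨a, rfl⟩ | ⟨x, rfl⟩
      · simp
      · rw [ptFun_pt]; split_ifs <;> simp
      · simp
    · intro m _ k _
      rcases onePoint_cases z with rfl | ⟨a, rfl⟩ | ⟨x, rfl⟩
      · simp
      · rw [ptFun_pt, ptFun_pt]
        split_ifs with h1 h2 <;> simp
        simpa using h1.symm.trans h2
      · simp
  rw [← h1]
  exact (le_abs_self _).trans ((hC h).trans (mul_le_of_le_one_right hC0 h2))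

theorem summable_abs_apply_ptFun (hC : ∀ h, |μ h| ≤ C * ‖h‖) :
    Summable fun m => |μ (ptFun B (m, true))| :=
  summable_of_sum_le (fun _ => abs_nonneg _) (sum_abs_apply_ptFun_le hC)

theorem tsum_abs_apply_ptFun_le (hC : ∀ h, |μ h| ≤ C * ‖h‖) :
    ∑' m, |μ (ptFun B (m, true))| ≤ C :=
  (summable_abs_apply_ptFun hC).tsum_le_of_sum_le (sum_abs_apply_ptFun_le hC)

theorem norm_limFun_le (x : I) : ‖limFun B x‖ ≤ 1 := by
  refine (ContinuousMap.norm_le _ zero_le_one).mpr fun z => ?_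
  rcases onePoint_cases z with rfl | ⟨a, rfl⟩ | ⟨y, rfl⟩
  · simp
  · rw [limFun_pt]; split_ifs <;> simp
  · rw [limFun_lim]; split_ifs <;> simp

/-- To check that an equibounded net of functionals tends to zero pointwise, it suffices to do so
on constants and on indicator functions. -/
theorem tendsto_apply_zero_of_indicators {ι : Type*} {l : Filter ι}
    {Λ : ι → C(OnePoint (PsiSpace B), ℝ) →L[ℝ] ℝ} (hC : ∀ i h, |Λ i h| ≤ C * ‖h‖)
    (h1 : Tendsto (fun i => Λ i 1) l (𝓝 0))
    (hpt : ∀ a, Tendsto (fun i => Λ i (ptFun B a)) l (𝓝 0))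
    (hlim : ∀ x, Tendsto (fun i => Λ i (limFun B x)) l (𝓝 0)) (g : C(OnePoint (PsiSpace B), ℝ)) :
    Tendsto (fun i => Λ i g) l (𝓝 0) := by
  let Z : Submodule ℝ C(OnePoint (PsiSpace B), ℝ) :=
    { carrier := {h | Tendsto (fun i => Λ i h) l (𝓝 0)}
      add_mem' := fun {h k} hh hk => by
        have h2 : Tendsto (fun i => Λ i h + Λ i k) l (𝓝 (0 + 0)) := Tendsto.add hh hk
        simpa using h2
      zero_mem' := by simp [tendsto_const_nhds]
      smul_mem' := fun c h hh => by
        have h2 : Tendsto (fun i => c * Λ i h) l (𝓝 (c * 0)) := Tendsto.const_mul c hh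
        simpa using h2 }
  refine mem_of_indicators_mem (Z := Z) ?_ h1 hpt hlim g
  refine isClosed_of_closure_subset fun h hh => ?_
  refine Metric.tendsto_nhds.mpr fun ε hε => ?_
  have hC' : 0 < |C| + 1 := by positivity
  obtain ⟨k, hk, hhk⟩ := Metric.mem_closure_iff.mp hh (ε / 2 / (|C| + 1)) (by positivity)
  filter_upwards [Metric.tendsto_nhds.mp hk (ε / 2) (half_pos hε)] with i hi
  rw [Real.dist_eq, sub_zero] at hi ⊢
  have h2 : |Λ i (h - k)| ≤ ε / 2 := by
    refine (hC i _).trans ?_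
    rw [← dist_eq_norm]
    calc C * dist h k ≤ (|C| + 1) * dist h k :=
          mul_le_mul_of_nonneg_right ((le_abs_self C).trans (by linarith)) dist_nonneg
      _ ≤ (|C| + 1) * (ε / 2 / (|C| + 1)) := by gcongr
      _ = ε / 2 := by field_simp
  have h3 : Λ i h = Λ i (h - k) + Λ i k := by rw [← map_add, sub_add_cancel]
  rw [h3]
  calc _ ≤ |Λ i (h - k)| + |Λ i k| := abs_add_le _ _
    _ < ε := by linarith

theorem tendsto_apply_sub_of_indicators {ι : Type*} {l : Filter ι}
    {ν : ι → C(OnePoint (PsiSpace B), ℝ) →L[ℝ] ℝ} (hC : ∀ i h, |ν i h| ≤ C * ‖h‖)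
    (h1 : ∀ i, ν i 1 = 0) (hpt : ∀ a, Tendsto (fun i => ν i (ptFun B a)) l (𝓝 0)) (x : I)
    (hlim : ∀ y, y ≠ x → Tendsto (fun i => ν i (limFun B y)) l (𝓝 0))
    (g : C(OnePoint (PsiSpace B), ℝ)) :
    Tendsto (fun i => ν i g - (g (lim B x) - g OnePoint.infty) * ν i (limFun B x)) l (𝓝 0) := by
  let ev : C(OnePoint (PsiSpace B), ℝ) →L[ℝ] ℝ :=
    ContinuousMap.evalCLM ℝ (lim B x : OnePoint (PsiSpace B)) -
      ContinuousMap.evalCLM ℝ OnePoint.infty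
  have hev : ∀ h, ev h = h (lim B x) - h OnePoint.infty := fun h => rfl
  have hΛ : ∀ i h, (ν i - ν i (limFun B x) • ev) h =
      ν i h - (h (lim B x) - h OnePoint.infty) * ν i (limFun B x) := by
    intro i h
    simp [hev, mul_comm]
  have key := tendsto_apply_zero_of_indicators (C := C + 2 * C) (l := l)
    (Λ := fun i => ν i - ν i (limFun B x) • ev) ?_ ?_ ?_ ?_ g
  · simpa only [hΛ] using key
  · intro i h
    have hC0 : 0 ≤ C := by simpa using (abs_nonneg _).trans (hC i 1)
    have h2 : |ν i (limFun B x)| ≤ C :=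
      (hC i _).trans (mul_le_of_le_one_right hC0 (norm_limFun_le x))
    have h3 : |h (lim B x) - h OnePoint.infty| ≤ 2 * ‖h‖ := by
      refine (abs_sub _ _).trans ?_
      have h4 := h.norm_coe_le_norm (lim B x : OnePoint (PsiSpace B))
      have h5 := h.norm_coe_le_norm OnePoint.infty
      rw [Real.norm_eq_abs] at h4 h5
      linarith
    rw [hΛ]
    refine (abs_sub _ _).trans ?_
    rw [abs_mul]
    have := mul_le_mul h3 h2 (abs_nonneg _) (by positivity)
    linarith [hC i h]
  · simp only [hΛ]
    simp [h1, tendsto_const_nhds]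
  · intro a
    simp only [hΛ]
    simpa using hpt a
  · intro y
    simp only [hΛ]
    by_cases hy : y = x
    · subst hy
      simp [limFun_lim, tendsto_const_nhds]
    · simpa [limFun_lim, Ne.symm hy] using hlim y hy

end Functional

section Residual

variable {I : Type*} {f : I → ℕ → ℝ} [IsAlmostDisjoint (signFamily f)]
  {μ : C(OnePoint (PsiSpace (signFamily f)), ℝ) →L[ℝ] ℝ} {C : ℝ}

theorem abs_apply_limFun_sub_pairing_le (hC : ∀ h, |μ h| ≤ C * ‖h‖)
    (hsign : ∀ x m, f x m = 0 ∨ f x m = 1 ∨ f x m = -1) (y : I) :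
    |μ (limFun (signFamily f) y) - pairing (fun m => μ (ptFun _ (m, true))) (f y)| ≤ 2 * C := by
  have hC0 : 0 ≤ C := by simpa using (abs_nonneg _).trans (hC 1)
  have h1 := (hC _).trans (mul_le_of_le_one_right hC0 (norm_limFun_le (B := signFamily f) y))
  have h2 := abs_pairing_le_of_tsum_le (summable_abs_apply_ptFun hC) (tsum_abs_apply_ptFun_le hC)
    fun m => abs_le_one_of_sign (hsign y m)
  exact (abs_sub _ _).trans (by linarith)

theorem sum_abs_apply_limFun_sub_pairing_le (hμ : ∀ h ∈ evenSubspace (signFamily f), μ h = 0)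
    (hC : ∀ h, |μ h| ≤ C * ‖h‖) (hsign : ∀ x m, f x m = 0 ∨ f x m = 1 ∨ f x m = -1)
    (had : Pairwise fun x y => (Function.support (f x) ∩ Function.support (f y)).Finite)
    (G : Finset I) :
    ∑ y ∈ G, |μ (limFun (signFamily f) y) - pairing (fun m => μ (ptFun _ (m, true))) (f y)| ≤
      C := by
  classical
  have hC0 : 0 ≤ C := by simpa using (abs_nonneg _).trans (hC 1)
  set a : ℕ → ℝ := fun m => μ (ptFun _ (m, true)) with ha
  have hsum := summable_abs_apply_ptFun hC
  have hlim : Tendsto (fun k => ∑ y ∈ G, |μ (limFun (signFamily f) y) -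
      ∑ m ∈ Finset.range k, a m * f y m|) atTop
      (𝓝 (∑ y ∈ G, |μ (limFun (signFamily f) y) - pairing a (f y)|)) := by
    refine tendsto_finsetSum _ fun y _ => (tendsto_const_nhds.sub ?_).abs
    exact (summable_mul_of_abs_le_one hsum
      fun m => abs_le_one_of_sign (hsign y m)).hasSum.tendsto_sum_nat
  have hfin : (⋃ y ∈ G, ⋃ z ∈ G, ⋃ _ : y ≠ z,
      Function.support (f y) ∩ Function.support (f z)).Finite :=
    G.finite_toSet.biUnion fun y _ => G.finite_toSet.biUnion fun z _ => finite_iUnion fun h => had h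
  obtain ⟨k₀, hk₀⟩ := hfin.bddAbove
  have hdisj : ∀ m, k₀ < m → ∀ y ∈ G, ∀ z ∈ G, f y m ≠ 0 → f z m ≠ 0 → y = z := by
    intro m hm y hy z hz hym hzm
    by_contra hne
    refine hm.not_ge (hk₀ ?_)
    simp only [mem_iUnion]
    exact ⟨y, hy, z, hz, hne, hym, hzm⟩
  refine le_of_tendsto hlim ?_
  filter_upwards [eventually_gt_atTop k₀] with k hk
  let t : I → C(OnePoint (PsiSpace (signFamily f)), ℝ) := fun y => limFun _ y -
    ∑ m ∈ Finset.range k, ((if (m, true) ∈ signFamily f y then (1 : ℝ) else 0) •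
      ptFun _ (m, true) + (if (m, false) ∈ signFamily f y then (1 : ℝ) else 0) •
      ptFun _ (m, false))
  have ht : ∀ y, μ (t y) = μ (limFun _ y) - ∑ m ∈ Finset.range k, a m * f y m := by
    intro y
    simp only [t, map_sub, map_sum, map_add, map_smul, smul_eq_mul, apply_ptFun_false hμ]
    congr 1
    refine Finset.sum_congr rfl fun m _ => ?_
    rcases hsign y m with h | h | h <;> simp [signFamily, h, ha] <;> norm_num
  have htpt : ∀ y (b : ℕ × Bool), t y (pt (signFamily f) b) =
      if k ≤ b.1 ∧ b ∈ signFamily f y then 1 else 0 := by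
    rintro y ⟨n, b⟩
    simp only [t, ContinuousMap.sub_apply, ContinuousMap.sum_apply, ContinuousMap.add_apply,
      ContinuousMap.smul_apply, ptFun_pt, limFun_pt, Prod.mk.injEq, smul_eq_mul]
    cases b
    · by_cases hkn : k ≤ n
      · simp [hkn, Finset.sum_ite_eq]
      · simp [hkn, not_le.mp hkn]
    · by_cases hkn : k ≤ n
      · simp [hkn, Finset.sum_ite_eq]
      · simp [hkn, not_le.mp hkn]
  have htlim : ∀ y x, t y (lim (signFamily f) x) = if x = y then 1 else 0 := by
    intro y x
    simp only [t, ContinuousMap.sub_apply, ContinuousMap.sum_apply, ContinuousMap.add_apply,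
      ContinuousMap.smul_apply, limFun_lim, ptFun_lim, smul_eq_mul, mul_zero, add_zero,
      Finset.sum_const_zero, sub_zero]
  have htinf : ∀ y, t y OnePoint.infty = 0 := by
    intro y
    simp only [t, ContinuousMap.sub_apply, ContinuousMap.sum_apply, ContinuousMap.add_apply,
      ContinuousMap.smul_apply, limFun_infty, ptFun_infty, smul_eq_mul, mul_zero, add_zero,
      Finset.sum_const_zero, sub_zero]
  set h := ∑ y ∈ G, (SignType.sign (μ (t y)) : ℝ) • t y with hh
  have h1 : μ h = ∑ y ∈ G, |μ (t y)| := by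
    rw [hh, map_sum]
    exact Finset.sum_congr rfl fun m _ => by rw [map_smul, smul_eq_mul, sign_mul_self]
  have h2 : ‖h‖ ≤ 1 := by
    refine (ContinuousMap.norm_le _ zero_le_one).mpr fun z => ?_
    rw [Real.norm_eq_abs, hh, ContinuousMap.sum_apply]
    simp only [ContinuousMap.smul_apply, smul_eq_mul]
    refine abs_sum_mul_le_one (fun m _ => abs_sign_le_one _) ?_ ?_
    · intro y _
      rcases onePoint_cases z with rfl | ⟨b, rfl⟩ | ⟨x, rfl⟩
      · simp [htinf]
      · rw [htpt]; split_ifs <;> simp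
      · rw [htlim]; split_ifs <;> simp
    · intro y hy y' hy'
      rcases onePoint_cases z with rfl | ⟨b, rfl⟩ | ⟨x, rfl⟩
      · simp [htinf]
      · intro h1 h2
        rw [htpt, ne_eq, ite_eq_right_iff, not_forall] at h1 h2
        obtain ⟨⟨hkb, hb⟩, -⟩ := h1
        obtain ⟨⟨-, hb'⟩, -⟩ := h2
        exact hdisj b.1 (hk.trans_le hkb) y hy y' hy' (mem_support_of_mem_signFamily hb)
          (mem_support_of_mem_signFamily hb')
      · intro h1 h2
        rw [htlim, ne_eq, ite_eq_right_iff, not_forall] at h1 h2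
        exact h1.1.symm.trans h2.1
  simp only [← ht]
  rw [← h1]
  exact (le_abs_self _).trans ((hC h).trans (mul_le_of_le_one_right hC0 h2))

theorem countable_setOf_apply_limFun_ne_pairing
    (hμ : ∀ h ∈ evenSubspace (signFamily f), μ h = 0)
    (hC : ∀ h, |μ h| ≤ C * ‖h‖) (hsign : ∀ x m, f x m = 0 ∨ f x m = 1 ∨ f x m = -1)
    (had : Pairwise fun x y => (Function.support (f x) ∩ Function.support (f y)).Finite) :
    {y | μ (limFun (signFamily f) y) -
      pairing (fun m => μ (ptFun _ (m, true))) (f y) ≠ 0}.Countable := by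
  have := (summable_of_sum_le (fun _ => abs_nonneg _)
    (sum_abs_apply_limFun_sub_pairing_le hμ hC hsign had)).countable_support
  simpa [Function.support] using this

end Residual

end PsiSpace

theorem exists_tendsto_hyperfilter_of_abs_le {u : ℕ → ℝ} {C : ℝ} (h : ∀ i, |u i| ≤ C) :
    ∃ β, Tendsto u (hyperfilter ℕ) (𝓝 β) := by
  obtain ⟨β, -, hβ⟩ := (isCompact_Icc (a := -C) (b := C)).ultrafilter_le_nhds
    ((hyperfilter ℕ).map u) (by
      rw [le_principal_iff]
      exact Filter.mem_map.mpr (univ_mem' fun i => abs_le.mp (h i)))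
  exact ⟨β, hβ⟩

theorem exists_enumeration_of_countable_support {I : Type*} {ρ : ℕ → I → ℝ} {C : ℝ} (hC0 : 0 ≤ C)
    (hC : ∀ n y, |ρ n y| ≤ C) (hρ : ∀ n, {y | ρ n y ≠ 0}.Countable) :
    ∃ b : ℕ → ℕ → ℝ, (∀ n m, |b n m| ≤ C) ∧
      ∀ y, (∀ n, ρ n y = 0) ∨ ∃ m, ∀ n, b n m = ρ n y := by
  rcases (⋃ n, {y | ρ n y ≠ 0}).eq_empty_or_nonempty with hJ | hJ
  · refine ⟨fun _ _ => 0, by simpa, fun y => Or.inl fun n => ?_⟩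
    by_contra h
    exact (hJ ▸ mem_iUnion.mpr ⟨n, h⟩ : y ∈ (∅ : Set I))
  · obtain ⟨e, he⟩ := (countable_iUnion hρ).exists_eq_range hJ
    refine ⟨fun n m => ρ n (e m), fun n m => hC n _, fun y => ?_⟩
    by_cases hy : ∀ n, ρ n y = 0
    · exact Or.inl hy
    · push Not at hy
      obtain ⟨m, rfl⟩ : y ∈ range e := he ▸ mem_iUnion.mpr hy
      exact Or.inr ⟨m, fun n => rfl⟩

theorem exists_pos_mul_norm_le {X Y : Type*} [NormedAddCommGroup X] [NormedSpace ℝ X]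
    [NormedAddCommGroup Y] [NormedSpace ℝ Y] (T : X ≃L[ℝ] Y) :
    ∃ c > 0, ∀ x, c * ‖x‖ ≤ ‖T x‖ := by
  set N := ‖(T.symm : Y →L[ℝ] X)‖
  have hN : 0 < N + 1 := by positivity
  refine ⟨(N + 1)⁻¹, inv_pos.mpr hN, fun x => ?_⟩
  rw [inv_mul_le_iff₀ hN]
  have h := (T.symm : Y →L[ℝ] X).le_opNorm (T x)
  rw [ContinuousLinearEquiv.coe_coe, T.symm_apply_apply] at h
  exact h.trans (mul_le_mul_of_nonneg_right (le_add_of_nonneg_right zero_le_one) (norm_nonneg _))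

namespace PsiSpace

section Operator

variable {I : Type*} {f : I → ℕ → ℝ} [IsAlmostDisjoint (signFamily f)]

/-- Functionals annihilating the even functions and bounded away from zero on the odd part
of the isolated points separate along three sequences at the function of some member of the
family, with differences concentrated at the corresponding limit point. -/
theorem exists_separated_functionals
    (hsign : ∀ x m, f x m = 0 ∨ f x m = 1 ∨ f x m = -1)
    (had : Pairwise fun x y => (Function.support (f x) ∩ Function.support (f y)).Finite)
    (hf : IsDiagonalizing f)
    {μ : ℕ → C(OnePoint (PsiSpace (signFamily f)), ℝ) →L[ℝ] ℝ} {C c : ℝ}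
    (hμ : ∀ n, ∀ h ∈ evenSubspace (signFamily f), μ n h = 0)
    (hC : ∀ n h, |μ n h| ≤ C * ‖h‖) (hc : 0 < c) (hμc : ∀ n, c ≤ |μ n (ptFun _ (n, true))|) :
    ∃ (x : I) (p q r : ℕ → ℕ) (δ : ℝ), 0 < δ ∧
      (∀ᶠ i in (hyperfilter ℕ : Filter ℕ),
        δ ≤ μ (p i) (limFun _ x) - μ (r i) (limFun _ x) ∧
        δ ≤ μ (r i) (limFun _ x) - μ (q i) (limFun _ x)) ∧
      ∀ g, Tendsto (fun i => (μ (p i) g - μ (r i) g) - (g (lim (signFamily f) x) - g OnePoint.infty) *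
          (μ (p i) (limFun _ x) - μ (r i) (limFun _ x))) (hyperfilter ℕ) (𝓝 0) ∧
        Tendsto (fun i => (μ (q i) g - μ (r i) g) - (g (lim (signFamily f) x) - g OnePoint.infty) *
          (μ (q i) (limFun _ x) - μ (r i) (limFun _ x))) (hyperfilter ℕ) (𝓝 0) := by
  have hC0 : 0 ≤ C := by simpa using (abs_nonneg _).trans (hC 0 1)
  set a : ℕ → ℕ → ℝ := fun n m => μ n (ptFun _ (m, true)) with ha
  obtain ⟨b, hbC, hb⟩ := exists_enumeration_of_countable_support (by positivity : 0 ≤ 2 * C)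
    (fun n y => abs_apply_limFun_sub_pairing_le (hC n) hsign y)
    (fun n => countable_setOf_apply_limFun_ne_pairing (hμ n) (hC n) hsign had)
  obtain ⟨x, A, s, hsf, hs, hnull⟩ := hf a b ⟨2 * C, c, hc,
    fun n => summable_abs_apply_ptFun (hC n),
    fun n => (tsum_abs_apply_ptFun_le (hC n)).trans (by linarith), hbC, hμc⟩
  have key : ∀ u : ℕ → ℕ, (∀ m, Tendsto (fun i => a (u i) m - a (s.r i) m) atTop (𝓝 0)) →
      (∀ m, Tendsto (fun i => b (u i) m - b (s.r i) m) atTop (𝓝 0)) →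
      (∀ y, y ≠ x → Tendsto (fun i => pairing (a (u i)) (f y) - pairing (a (s.r i)) (f y))
        (hyperfilter ℕ) (𝓝 0)) →
      Tendsto (fun i => (μ (u i) (limFun _ x) - μ (s.r i) (limFun _ x)) -
        (pairing (a (u i)) (f x) - pairing (a (s.r i)) (f x))) (hyperfilter ℕ) (𝓝 0) ∧
      ∀ g, Tendsto (fun i => (μ (u i) g - μ (s.r i) g) - (g (lim (signFamily f) x) - g OnePoint.infty) *
          (μ (u i) (limFun _ x) - μ (s.r i) (limFun _ x))) (hyperfilter ℕ) (𝓝 0) := by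
    intro u hua hub hunull
    have hρ : ∀ y, Tendsto (fun i => (μ (u i) (limFun _ y) - μ (s.r i) (limFun _ y)) -
        (pairing (a (u i)) (f y) - pairing (a (s.r i)) (f y))) (hyperfilter ℕ) (𝓝 0) := by
      intro y
      rcases hb y with h | ⟨m, h⟩
      · refine tendsto_const_nhds.congr fun i => ?_
        have h1 := h (u i)
        have h2 := h (s.r i)
        simp only [ha]
        linarith
      · refine ((hub m).mono_left Nat.hyperfilter_le_atTop).congr fun i => ?_
        rw [h, h]
        simp only [ha]
        ring
    refine ⟨hρ x, tendsto_apply_sub_of_indicators (ν := fun i => μ (u i) - μ (s.r i)) (C := C + C)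
      (fun i h => ?_) (fun i => ?_) ?_ x fun y hy => ?_⟩
    · rw [_root_.sub_apply, add_mul]
      exact (abs_sub _ _).trans (add_le_add (hC _ _) (hC _ _))
    · rw [_root_.sub_apply, hμ _ _ one_mem_evenSubspace,
        hμ _ _ one_mem_evenSubspace, sub_zero]
    · rintro ⟨m, _ | _⟩
      · simp only [_root_.sub_apply, apply_ptFun_false (hμ _)]
        simpa [ha, neg_add_eq_sub] using ((hua m).mono_left Nat.hyperfilter_le_atTop).neg
      · exact (hua m).mono_left Nat.hyperfilter_le_atTop
    · simpa using (hρ y).add (hunull y hy)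
  obtain ⟨hp, hpg⟩ := key s.p (fun m => (hs.tendsto_left m).1) (fun m => (hs.tendsto_right m).1)
    fun y hy => (hnull y hy).1
  obtain ⟨hq, hqg⟩ := key s.q (fun m => (hs.tendsto_left m).2) (fun m => (hs.tendsto_right m).2)
    fun y hy => (hnull y hy).2
  obtain ⟨δ, hδ, hsep⟩ := hs.separated
  rw [hsf] at hsep
  refine ⟨x, s.p, s.q, s.r, δ / 2, half_pos hδ, ?_, fun g => ⟨hpg g, hqg g⟩⟩
  filter_upwards [hp.eventually (Ioo_mem_nhds (neg_lt_zero.mpr (half_pos hδ)) (half_pos hδ)),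
    hq.eventually (Ioo_mem_nhds (neg_lt_zero.mpr (half_pos hδ)) (half_pos hδ))] with i h1 h2
  have := hsep i
  exact ⟨by linarith [h1.1], by linarith [h2.2]⟩

theorem not_surjective_of_isDiagonalizing {K : Type*} [TopologicalSpace K] [CompactSpace K]
    (hsign : ∀ x m, f x m = 0 ∨ f x m = 1 ∨ f x m = -1)
    (had : Pairwise fun x y => (Function.support (f x) ∩ Function.support (f y)).Finite)
    (hf : IsDiagonalizing f)
    (S : C(OnePoint (PsiSpace (signFamily f)), ℝ) →L[ℝ] C(K, ℝ))
    (hS : ∀ h ∈ evenSubspace (signFamily f), S h = 0) {c : ℝ} (hc : 0 < c)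
    (hSc : ∀ n, c ≤ ‖S (ptFun _ (n, true))‖) : ¬ Function.Surjective S := by
  intro hsurj
  have hk : ∀ n, ∃ k, c / 2 ≤ |S (ptFun _ (n, true)) k| := by
    intro n
    by_contra! h
    have := (ContinuousMap.norm_le _ (half_pos hc).le).mpr fun z =>
      (Real.norm_eq_abs _).trans_le (h z).le
    linarith [hSc n]
  choose k hk using hk
  have hC : ∀ n h, |(ContinuousMap.evalCLM ℝ (k n)).comp S h| ≤ ‖S‖ * ‖h‖ := fun n h =>
    ((S h).norm_coe_le_norm (k n)).trans (S.le_opNorm h)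
  obtain ⟨x, p, q, r, δ, hδ, hsep, htend⟩ := exists_separated_functionals hsign had hf
    (μ := fun n => (ContinuousMap.evalCLM ℝ (k n)).comp S)
    (fun n h hh => by simp [hS h hh]) hC (half_pos hc) hk
  have hlim : ∀ u : ℕ → ℕ, ∃ β, Tendsto (fun i => S (limFun _ x) (k (u i)))
      (hyperfilter ℕ) (𝓝 β) := fun u =>
    exists_tendsto_hyperfilter_of_abs_le fun i => hC (u i) _
  obtain ⟨β₁, hβ₁⟩ := hlim p
  obtain ⟨β₂, hβ₂⟩ := hlim q
  obtain ⟨β₀, hβ₀⟩ := hlim r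
  have h1 : δ ≤ β₁ - β₀ := ge_of_tendsto (hβ₁.sub hβ₀) (hsep.mono fun i h => h.1)
  have h2 : δ ≤ β₀ - β₂ := ge_of_tendsto (hβ₀.sub hβ₂) (hsep.mono fun i h => h.2)
  obtain ⟨g, hg⟩ := hsurj ⟨fun z => max (S (limFun _ x) z - β₀) 0, by fun_prop⟩
  have hmax : ∀ {u : ℕ → ℕ} {β : ℝ}, Tendsto (fun i => S (limFun _ x) (k (u i)))
      (hyperfilter ℕ) (𝓝 β) →
      Tendsto (fun i => S g (k (u i))) (hyperfilter ℕ) (𝓝 (max (β - β₀) 0)) := by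
    intro u β h
    rw [hg]
    exact (h.sub_const β₀).max tendsto_const_nhds
  have e1 := tendsto_nhds_unique (htend g).1 (((hmax hβ₁).sub (hmax hβ₀)).sub
    ((hβ₁.sub hβ₀).const_mul _))
  have e2 := tendsto_nhds_unique (htend g).2 (((hmax hβ₂).sub (hmax hβ₀)).sub
    ((hβ₂.sub hβ₀).const_mul _))
  rw [sub_self, max_self, sub_zero, max_eq_left (by linarith)] at e1
  rw [sub_self, max_self, sub_zero, max_eq_right (by linarith), zero_sub, zero_eq_neg,
    mul_eq_zero] at e2
  rcases e2 with e2 | e2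
  · rw [e2] at e1
    linarith
  · linarith

end Operator

theorem half_le_norm_mk_ptFun {I : Type*} {B : I → Set (ℕ × Bool)} [IsAlmostDisjoint B] (n : ℕ) :
    1 / 2 ≤ ‖(Submodule.Quotient.mk (ptFun B (n, true)) :
      C(OnePoint (PsiSpace B), ℝ) ⧸ evenSubspace B)‖ := by
  refine le_of_forall_pos_lt_add fun ε hε => ?_
  obtain ⟨h, hmk, hlt⟩ := Submodule.Quotient.norm_mk_lt
    (Submodule.Quotient.mk (ptFun B (n, true)) : C(OnePoint (PsiSpace B), ℝ) ⧸ evenSubspace B) hε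
  refine lt_of_le_of_lt ?_ hlt
  have heven := (Submodule.Quotient.eq _).mp hmk n
  simp only [ContinuousMap.sub_apply, ptFun_pt] at heven
  norm_num at heven
  have h1 := abs_le.mp (h.norm_coe_le_norm (pt B (n, true)))
  have h2 := abs_le.mp (h.norm_coe_le_norm (pt B (n, false)))
  linarith

theorem not_isCSpace_quotient_evenSubspace {I : Type*} {f : I → ℕ → ℝ}
    [IsAlmostDisjoint (signFamily f)]
    (hclosed : IsClosed (evenSubspace (signFamily f) :
      Set C(OnePoint (PsiSpace (signFamily f)), ℝ)))
    (hsign : ∀ x m, f x m = 0 ∨ f x m = 1 ∨ f x m = -1)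
    (had : Pairwise fun x y => (Function.support (f x) ∩ Function.support (f y)).Finite)
    (hf : IsDiagonalizing f) :
    ¬ IsCSpace (C(OnePoint (PsiSpace (signFamily f)), ℝ) ⧸ evenSubspace (signFamily f)) := by
  rintro ⟨K, _, _, _, ⟨T⟩⟩
  obtain ⟨c, hc, hT⟩ := exists_pos_mul_norm_le T
  refine not_surjective_of_isDiagonalizing hsign had hf
    (T.toContinuousLinearMap.comp (evenSubspace (signFamily f)).mkQL) (fun h hh => ?_)
    (half_pos hc) (fun n => ?_) (T.surjective.comp (Submodule.mkQ_surjective _))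
  · have : (evenSubspace (signFamily f)).mkQ h = 0 :=
      (Submodule.Quotient.mk_eq_zero _).mpr hh
    exact (congrArg T this).trans (map_zero T)
  · refine le_trans ?_ (hT _)
    have := mul_le_mul_of_nonneg_left (half_le_norm_mk_ptFun (B := signFamily f) n) hc.le
    rwa [mul_one_div] at this

end PsiSpace

end

/-- There exist a separable scattered compact Hausdorff space `L` and a closed subspace
`Y` of `C(L)` isomorphic to `c₀` such that the quotient `C(L)/Y` is not a C-space.
(Here `c₀` is realized as `C₀(ℕ, ℝ)`, the space of real sequences vanishing at
infinity.) -/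
theorem statement18 :
    ∃ (L : Type) (_ : TopologicalSpace L) (_ : CompactSpace L) (_ : T2Space L),
      TopologicalSpace.SeparableSpace L ∧ IsScatteredSpace L ∧
      ∃ (Y : Submodule ℝ C(L, ℝ)) (_ : IsClosed (Y : Set C(L, ℝ))),
        Nonempty (↥Y ≃L[ℝ] C₀(ℕ, ℝ)) ∧ ¬ IsCSpace (C(L, ℝ) ⧸ Y) := by
  obtain ⟨I, f, hsign, hinf, had, hf⟩ := exists_diagonalizing_family
  have := isAlmostDisjoint_signFamily had
  exact ⟨OnePoint (PsiSpace (signFamily f)), inferInstance, inferInstance, inferInstance,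
    PsiSpace.separableSpace_onePoint (infinite_signFamily hsign hinf),
    PsiSpace.isScatteredSpace_onePoint, PsiSpace.evenSubspace _, PsiSpace.isClosed_evenSubspace,
    PsiSpace.nonempty_evenSubspace_equiv (infinite_signFamily hsign hinf)
      (finite_signFamily_inter_flip had),
    PsiSpace.not_isCSpace_quotient_evenSubspace _ hsign had hf⟩
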